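/- arXiv:1009.6109 — 2 statements merged into one kernel-verified Lean document; each statement's English description precedes it below -/
import Mathlib

section
/- Let q > 2 be a prime power and K a finite field with q² elements. Let 𝒰 be a unital in PG(2,q²) and let M be the subgroup of PGL(3,K) consisting of the projectivities that map 𝒰 onto itself. If there exist two distinct points P, Q ∈ 𝒰 such that the stabiliser G = M_{P,Q} (the subgroup of M fixing both P and Q) has order q² − 1, then 𝒰 is classical, i.e. 𝒰 is the image of the Hermitian curve {(x:y:z) : x^{q+1} + y^{q+1} + z^{q+1} = 0} under some element of PGL(3,K). -/
/-!
In coordinates where `P = (1:0:0)`, `Q = (0:0:1)` and the tangents at `P` and `Q` meet in `(0:1:0)`,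
the stabiliser of `P` and `Q` is diagonal. Having order `q² - 1`, it contains the `q + 1` elements
that multiply `x` and `z` by the same norm-one factor and induces all of `𝔽_q^*` on the ratio
`x / z`. After rescaling `x`, the affine part of the unital therefore has the equation
`z ^ (q + 1) * g (x / z) = 1`, where `g` takes values in `𝔽_q`, vanishes exactly on `𝔽_q`, and is
homogeneous of some degree `s` under `𝔽_q^*`.

Counting on the lines `x = m * z + b` shows that the values `(m - c) ^ (q + 1) / g c`, for `c`
outside `𝔽_q`, cover `𝔽_q^*` evenly, except for a single value which a product formula identifies
as `g* m = (m ^ q - m) ^ 2 / g m`. Hence the coefficients of the Rédei polynomial with roots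
`(X - c) ^ (q + 1) / g c` vanish in a long range, and the first surviving coefficient represents
`g*`; differentiating it modulo `X ^ q² - X` shows that the reduced polynomial of `g*` has
derivative of degree at most `q`. By duality the same holds for `g`. Two such sparse polynomials
with product `(X ^ q - X) ^ 2` must be multiples of `X ^ q - X`: for `s = 1` by unique factorisation
after a Frobenius untwisting, and for `s ≠ 1` by comparing a single power sum. Then the unital is
the curve `x ^ q * z - x * z ^ q = (a - a ^ q) * y ^ (q + 1)`, which is Hermitian.
-/

open Projectivization
open scoped LinearAlgebra.Projectivization

variable (K : Type*) [Field K]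

/-- The point set of `PG(2,K)`. -/
abbrev PGPt := ℙ K (Fin 3 → K)

/-- A line of `PG(2,K)`: a 2-dimensional subspace of `K³`. -/
def PGLn := {W : Submodule K (Fin 3 → K) // Module.finrank K W = 2}

variable {K}

/-- Incidence between points and lines of `PG(2,K)`. -/
def PGMem (P : PGPt K) (L : PGLn K) : Prop := P.submodule ≤ L.1

/-- A unital in `PG(2,q²)`: a set of `q³+1` points meeting every line in `1` or `q+1` points. -/
def IsUnital (q : ℕ) (U : Set (PGPt K)) : Prop :=
  U.ncard = q ^ 3 + 1 ∧
    ∀ L : PGLn K, {P ∈ U | PGMem P L}.ncard = 1 ∨ {P ∈ U | PGMem P L}.ncard = q + 1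

lemma projmap_mul (f g : (Fin 3 → K) ≃ₗ[K] (Fin 3 → K)) (P : PGPt K) :
    Projectivization.map f.toLinearMap f.injective
      (Projectivization.map g.toLinearMap g.injective P) =
    Projectivization.map (f * g).toLinearMap (f * g).injective P := by
  induction' P using Projectivization.ind with v hv
  rfl

lemma projmap_one (P : PGPt K) :
    Projectivization.map (1 : (Fin 3 → K) ≃ₗ[K] (Fin 3 → K)).toLinearMap
      (1 : (Fin 3 → K) ≃ₗ[K] (Fin 3 → K)).injective P = P := by
  induction' P using Projectivization.ind with v hv
  rfl

/-- The permutation of the projective plane induced by a linear automorphism of `K³`. -/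
def projPerm (e : (Fin 3 → K) ≃ₗ[K] (Fin 3 → K)) : Equiv.Perm (PGPt K) where
  toFun := Projectivization.map e.toLinearMap e.injective
  invFun := Projectivization.map e.symm.toLinearMap e.symm.injective
  left_inv := fun P => by
    rw [projmap_mul, show e.symm * e = 1 from LinearEquiv.ext fun v => e.symm_apply_apply v, projmap_one]
  right_inv := fun P => by
    rw [projmap_mul, show e * e.symm = 1 from LinearEquiv.ext fun v => e.apply_symm_apply v, projmap_one]

/-- The homomorphism from linear automorphisms of `K³` to permutations of `PG(2,K)`;
its range is the group `PGL(3,K)` of projectivities, acting faithfully on the plane. -/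
def projHom : ((Fin 3 → K) ≃ₗ[K] (Fin 3 → K)) →* Equiv.Perm (PGPt K) where
  toFun := projPerm
  map_one' := by ext P; exact projmap_one P
  map_mul' := fun f g => by ext P; exact (projmap_mul f g P).symm

/-- `PGL(3,K)` as a group of permutations of the plane. -/
def PGL3 (K : Type*) [Field K] : Subgroup (Equiv.Perm (PGPt K)) := (projHom (K := K)).range

/-- The subgroup of `PGL(3,K)` preserving a point set `U`. -/
def presGroup (U : Set (PGPt K)) : Subgroup (Equiv.Perm (PGPt K)) where
  carrier := {σ | σ ∈ PGL3 K ∧ σ '' U = U}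
  one_mem' := ⟨one_mem _, by simp⟩
  mul_mem' := fun {a b} ha hb => ⟨mul_mem ha.1 hb.1, by
    rw [show ⇑(a * b) = ⇑a ∘ ⇑b from rfl, Set.image_comp, hb.2, ha.2]⟩
  inv_mem' := fun {a} ha => ⟨inv_mem ha.1, by
    conv_lhs => rw [← ha.2]
    rw [show (a⁻¹ : Equiv.Perm (PGPt K)) = a.symm from rfl]
    exact Equiv.symm_image_image a U⟩

/-- The stabiliser of two points inside the group preserving `U`. -/
def twoPtStab (U : Set (PGPt K)) (P Q : PGPt K) : Subgroup (Equiv.Perm (PGPt K)) where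
  carrier := {σ | σ ∈ presGroup U ∧ σ P = P ∧ σ Q = Q}
  one_mem' := ⟨one_mem _, rfl, rfl⟩
  mul_mem' := fun {a b} ha hb => ⟨mul_mem ha.1 hb.1, by
    simp [Equiv.Perm.mul_apply, hb.2.1, ha.2.1], by simp [Equiv.Perm.mul_apply, hb.2.2, ha.2.2]⟩
  inv_mem' := fun {a} ha => ⟨inv_mem ha.1,
    by rw [Equiv.Perm.inv_def, Equiv.symm_apply_eq]; exact ha.2.1.symm,
    by rw [Equiv.Perm.inv_def, Equiv.symm_apply_eq]; exact ha.2.2.symm⟩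

/-- The classical (Hermitian) unital: image of the Hermitian curve
`x^{q+1} + y^{q+1} + z^{q+1} = 0` under an element of `PGL(3,K)`. -/
def IsClassicalUnital (q : ℕ) (U : Set (PGPt K)) : Prop :=
  ∃ σ ∈ PGL3 K, σ '' {P : PGPt K |
    P.rep 0 ^ (q + 1) + P.rep 1 ^ (q + 1) + P.rep 2 ^ (q + 1) = 0} = U

section Polynomials

open Finset Polynomial Lagrange

theorem nodal_id_eq_of_monic {F : Type*} [Field F] {P : F[X]} {s : Finset F} (hP : P.Monic)
    (hcard : P.natDegree ≤ #s) (hroot : ∀ a ∈ s, P.IsRoot a) : nodal s id = P := by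
  refine (eq_of_monic_of_dvd_of_natDegree_le nodal_monic hP ?_ (by rwa [natDegree_nodal])).symm
  exact prod_dvd_of_coprime ((pairwise_coprime_X_sub_C Function.injective_id).set_pairwise _)
    fun a ha ↦ dvd_iff_isRoot.2 (hroot a ha)

theorem natDegree_coeff_nodal_le {R ι : Type*} [CommRing R] {s : Finset ι} {v : ι → R[X]} {d : ℕ}
    (hv : ∀ c ∈ s, (v c).natDegree ≤ d) (i : ℕ) :
    ((nodal s v).coeff i).natDegree ≤ (#s - i) * d := by
  nontriviality R
  rcases lt_or_ge #s i with hi | hi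
  · rw [coeff_eq_zero_of_natDegree_lt (by rwa [natDegree_nodal]), natDegree_zero]
    exact zero_le
  have hcoeff : (nodal s v).coeff i =
      (-1) ^ (#s - i) * ∑ t ∈ powersetCard (#s - i) s, ∏ c ∈ t, v c := by
    rw [← esymm_map_val, nodal_eq, prod_eq_multiset_prod]
    simpa only [Multiset.map_map, Multiset.card_map, Function.comp_def] using!
      Multiset.prod_X_sub_C_coeff (s.val.map v) (by simpa using hi)
  have hsum : (∑ t ∈ powersetCard (#s - i) s, ∏ c ∈ t, v c).natDegree ≤ (#s - i) * d := by
    refine natDegree_sum_le_of_forall_le _ _ fun t ht ↦ ?_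
    obtain ⟨hts, htc⟩ := mem_powersetCard.1 ht
    rw [← htc]
    exact (natDegree_prod_le _ _).trans (sum_le_card_nsmul _ _ _ fun c hc ↦ hv c (hts hc))
  rw [hcoeff]
  rcases neg_one_pow_eq_or R[X] (#s - i) with h | h <;> rw [h]
  · rwa [one_mul]
  · rwa [neg_one_mul, natDegree_neg]

theorem derivation_finset_prod {R A ι : Type*} [CommRing R] [CommRing A] [Algebra R A]
    [DecidableEq ι] (D : Derivation R A A) (s : Finset ι) (f : ι → A) :
    D (∏ i ∈ s, f i) = ∑ i ∈ s, (∏ j ∈ s.erase i, f j) * D (f i) := by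
  induction s using Finset.induction_on with
  | empty => simp
  | insert a s ha ih =>
    rw [prod_insert ha, D.leibniz, ih, sum_insert ha, erase_insert ha, smul_eq_mul, smul_eq_mul,
      mul_sum, add_comm]
    congr 1
    refine sum_congr rfl fun i hi ↦ ?_
    rw [erase_insert_of_ne (by rintro rfl; exact ha hi), prod_insert (by simp [ha]), mul_assoc]

theorem derivation_coeff_nodal {R A ι : Type*} [CommRing R] [CommRing A] [Algebra R A]
    [DecidableEq ι] (D : Derivation R A A) (s : Finset ι) (v : ι → A) (k : ℕ) :
    D ((nodal s v).coeff k) = -∑ i ∈ s, D (v i) * (nodal (s.erase i) v).coeff k := by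
  let : Differential A := ⟨D.restrictScalars ℤ⟩
  have h := congrArg (coeff · k)
    (derivation_finset_prod Differential.mapCoeffs s fun i ↦ X - C (v i))
  simp only [map_sub, Differential.mapCoeffs_X, Differential.mapCoeffs_C, zero_sub, mul_neg,
    sum_neg_distrib, coeff_neg, finsetSum_coeff, coeff_mul_C] at h
  rw [Differential.coeff_mapCoeffs] at h
  exact h.trans (congrArg _ (sum_congr rfl fun _ _ ↦ mul_comm _ _))

theorem coeff_nodal_erase_of_coeff_nodal_eq_zero {A ι : Type*} [CommRing A] [Nontrivial A]
    [DecidableEq ι] {s : Finset ι} {v : ι → A} {n : ℕ} (hn : n < #s)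
    (hgap : ∀ l, 1 ≤ l → l ≤ n → (nodal s v).coeff (#s - l) = 0) {c : ι} (hc : c ∈ s) :
    ∀ l ≤ n, (nodal (s.erase c) v).coeff (#s - 1 - l) = v c ^ l := by
  intro l hl
  induction l with
  | zero =>
    rw [pow_zero, Nat.sub_zero, ← card_erase_of_mem hc, ← natDegree_nodal (v := v)]
    exact nodal_monic
  | succ l ih =>
    have hcoeff := hgap (l + 1) (by omega) hl
    rw [nodal_eq_mul_nodal_erase hc, show #s - (l + 1) = #s - 1 - (l + 1) + 1 by omega,
      coeff_X_sub_C_mul, show #s - 1 - (l + 1) + 1 = #s - 1 - l by omega, ih (by omega),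
      sub_eq_zero] at hcoeff
    rw [hcoeff, pow_succ']

end Polynomials

section FieldOfSquareOrder

open Finset Polynomial Lagrange

/-- The nonzero elements of the subfield of order `q` of a field `F` of order `q²`, described as
the solutions of `β ^ (q - 1) = 1` so that no subfield has to be carried around. -/
def subfieldUnits (q : ℕ) (F : Type*) [Field F] [Fintype F] [DecidableEq F] : Finset F :=
  {β | β ^ (q - 1) = 1}

/-- The elements of a field `F` of order `q²` that lie outside its subfield of order `q`. -/
def offSubfield (q : ℕ) (F : Type*) [Field F] [Fintype F] [DecidableEq F] : Finset F :=
  {c | c ^ q ≠ c}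

variable {F : Type*} [Field F] [Fintype F] {q : ℕ}

@[simp]
theorem mem_offSubfield [DecidableEq F] {c : F} : c ∈ offSubfield q F ↔ c ^ q ≠ c := by
  simp [offSubfield]

theorem card_filter_pow_eq_le [DecidableEq F] {n : ℕ} (hn : 0 < n) (β : F) :
    #{x : F | x ^ n = β} ≤ n := by
  have hsub : ({x | x ^ n = β} : Finset F) ⊆ (nthRoots n β).toFinset := fun x hx ↦ by
    simpa [mem_nthRoots hn] using hx
  exact (card_le_card hsub).trans ((Multiset.toFinset_card_le _).trans (card_nthRoots n β))

variable (hF : Fintype.card F = q ^ 2)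
include hF

theorem one_lt_of_card_eq_sq : 1 < q := by
  have := hF ▸ Fintype.one_lt_card (α := F)
  exact lt_of_not_ge fun h ↦ by interval_cases q <;> simp_all

theorem exists_charP_of_card_eq_sq : ∃ p h : ℕ, p.Prime ∧ CharP F p ∧ h ≠ 0 ∧ q = p ^ h := by
  obtain ⟨p, hchar, n, hp, hn⟩ := FiniteField.card' F
  obtain ⟨h, -, rfl⟩ := (Nat.dvd_prime_pow hp).1 (hn ▸ hF ▸ dvd_pow_self q two_ne_zero)
  refine ⟨p, h, hp, hchar, ?_, rfl⟩
  rintro rfl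
  exact (one_lt_of_card_eq_sq hF).ne' (pow_zero p)

theorem cast_eq_zero_of_card_eq_sq : (q : F) = 0 := by
  have h := FiniteField.cast_card_eq_zero F
  rw [hF, Nat.cast_pow] at h
  exact eq_zero_of_pow_eq_zero h

theorem pow_pow_of_card_eq_sq (a : F) : (a ^ q) ^ q = a := by
  rw [← pow_mul, ← sq, ← hF, FiniteField.pow_card]

section Algebra

variable {A : Type*} [CommRing A] [Algebra F A]

theorem sub_pow_of_card_eq_sq (a b : A) : (a - b) ^ q = a ^ q - b ^ q := by
  nontriviality A
  obtain ⟨p, h, hp, hchar, -, rfl⟩ := exists_charP_of_card_eq_sq hF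
  have := Fact.mk hp
  have := charP_of_injective_algebraMap (FaithfulSMul.algebraMap_injective F A) p
  exact sub_pow_char_pow a b h

theorem add_pow_of_card_eq_sq (a b : A) : (a + b) ^ q = a ^ q + b ^ q := by
  rw [← sub_eq_iff_eq_add, ← sub_pow_of_card_eq_sq hF, add_sub_cancel_right]

theorem sum_pow_of_card_eq_sq {ι : Type*} (s : Finset ι) (f : ι → A) :
    (∑ i ∈ s, f i) ^ q = ∑ i ∈ s, f i ^ q := by
  nontriviality A
  obtain ⟨p, h, hp, hchar, -, rfl⟩ := exists_charP_of_card_eq_sq hF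
  have := Fact.mk hp
  have := charP_of_injective_algebraMap (FaithfulSMul.algebraMap_injective F A) p
  exact sum_pow_char_pow p h s f

theorem neg_one_pow_of_card_eq_sq : (-1 : A) ^ q = -1 := by
  have h := sub_pow_of_card_eq_sq hF (0 : A) 1
  rwa [zero_sub, zero_pow (one_lt_of_card_eq_sq hF).ne_bot, one_pow, zero_sub] at h

end Algebra

theorem sub_pow_succ_comm_of_card_eq_sq (a b : F) : (a - b) ^ (q + 1) = (b - a) ^ (q + 1) := by
  rw [← neg_sub b a, neg_pow, pow_succ (-1), neg_one_pow_of_card_eq_sq hF, neg_one_mul, neg_neg,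
    one_mul]

theorem mem_subfieldUnits [DecidableEq F] {β : F} :
    β ∈ subfieldUnits q F ↔ β ^ q = β ∧ β ≠ 0 := by
  have hq := one_lt_of_card_eq_sq hF
  rw [subfieldUnits, mem_filter, and_iff_right (mem_univ β)]
  rcases eq_or_ne β 0 with rfl | hβ
  · simp [zero_pow (show q - 1 ≠ 0 by omega)]
  · rw [and_iff_left hβ, ← Nat.sub_one_add_one hq.ne_bot, pow_succ, Nat.add_sub_cancel,
      mul_eq_right₀ hβ]

theorem pow_succ_mem_subfieldUnits [DecidableEq F] {x : F} (hx : x ≠ 0) :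
    x ^ (q + 1) ∈ subfieldUnits q F := by
  rw [mem_subfieldUnits hF, pow_succ, mul_pow, pow_pow_of_card_eq_sq hF, mul_comm]
  exact ⟨rfl, by positivity⟩

theorem sum_card_filter_pow_succ_eq [DecidableEq F] :
    ∑ β ∈ subfieldUnits q F, #{x : F | x ^ (q + 1) = β} = (q - 1) * (q + 1) := by
  have hcard : #({0}ᶜ : Finset F) = (q - 1) * (q + 1) := by
    rw [card_compl, hF, card_singleton, mul_comm]
    exact Nat.sq_sub_sq q 1
  rw [← hcard, card_eq_sum_card_fiberwise (f := (· ^ (q + 1))) (t := subfieldUnits q F)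
    fun x hx ↦ pow_succ_mem_subfieldUnits hF (by simpa using hx)]
  refine sum_congr rfl fun β hβ ↦ congrArg card ?_
  ext x
  simp only [mem_filter, mem_univ, true_and, mem_compl, mem_singleton, iff_and_self]
  rintro rfl rfl
  exact ((mem_subfieldUnits hF).1 hβ).2 (zero_pow q.succ_ne_zero)

theorem card_subfieldUnits [DecidableEq F] : #(subfieldUnits q F) = q - 1 := by
  have hq := one_lt_of_card_eq_sq hF
  refine le_antisymm (card_filter_pow_eq_le (by omega) 1) ?_
  have hle := sum_le_card_nsmul (subfieldUnits q F) _ (q + 1)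
    fun β _ ↦ card_filter_pow_eq_le q.succ_pos β
  rw [sum_card_filter_pow_succ_eq hF, smul_eq_mul] at hle
  exact Nat.le_of_mul_le_mul_right hle q.succ_pos

theorem card_filter_pow_succ_eq [DecidableEq F] {β : F} (hβ : β ∈ subfieldUnits q F) :
    #{x : F | x ^ (q + 1) = β} = q + 1 := by
  refine (sum_eq_sum_iff_of_le fun β _ ↦ card_filter_pow_eq_le q.succ_pos β).1 ?_ β hβ
  rw [sum_card_filter_pow_succ_eq hF, sum_const, card_subfieldUnits hF, smul_eq_mul]

theorem card_filter_pow_eq_self [DecidableEq F] : #{x : F | x ^ q = x} = q := by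
  have hq := one_lt_of_card_eq_sq hF
  have hinsert : ({x | x ^ q = x} : Finset F) = insert 0 (subfieldUnits q F) := by
    ext x
    rcases eq_or_ne x 0 with rfl | hx
    · simp [zero_pow hq.ne_bot]
    · simp [mem_subfieldUnits hF, hx]
  rw [hinsert, card_insert_of_notMem (by simp [mem_subfieldUnits hF]), card_subfieldUnits hF]
  omega

theorem card_offSubfield [DecidableEq F] : #(offSubfield q F) = q ^ 2 - q := by
  have h := card_filter_add_card_filter_not (s := (univ : Finset F)) (fun x : F ↦ x ^ q = x)
  rw [card_filter_pow_eq_self hF, card_univ, hF] at h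
  exact (Nat.sub_eq_of_eq_add' h.symm).symm

theorem nodal_subfieldUnits [DecidableEq F] : nodal (subfieldUnits q F) id = X ^ (q - 1) - 1 := by
  have hq : q - 1 ≠ 0 := (Nat.sub_pos_of_lt (one_lt_of_card_eq_sq hF)).ne'
  refine nodal_id_eq_of_monic (monic_X_pow_sub_C 1 hq) ?_ fun β hβ ↦ ?_
  · rw [card_subfieldUnits hF]
    exact natDegree_X_pow_sub_C.le
  · simpa [subfieldUnits, sub_eq_zero] using hβ

theorem nodal_univ_of_card_eq_sq : nodal (univ : Finset F) id = X ^ q ^ 2 - X := by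
  have hq : 1 < q ^ 2 := Nat.one_lt_pow two_ne_zero (one_lt_of_card_eq_sq hF)
  refine nodal_id_eq_of_monic (monic_X_pow_sub ?_) ?_ fun x _ ↦ ?_
  · rw [degree_X]
    exact_mod_cast hq
  · rw [card_univ, hF, FiniteField.X_pow_card_sub_X_natDegree_eq F hq]
  · simp [← hF, FiniteField.pow_card]

theorem prod_subfieldUnits [DecidableEq F] : ∏ β ∈ subfieldUnits q F, β = -1 := by
  have hq : q - 1 ≠ 0 := (Nat.sub_pos_of_lt (one_lt_of_card_eq_sq hF)).ne'
  have h := congrArg (eval 0) (nodal_subfieldUnits hF)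
  have hneg : (-1 : F) ∈ subfieldUnits q F :=
    (mem_subfieldUnits hF).2 ⟨neg_one_pow_of_card_eq_sq hF, by simp⟩
  have hsign : (-1 : F) ^ (q - 1) = 1 := by simpa [subfieldUnits] using hneg
  simp only [eval_nodal, id, zero_sub, eval_sub, eval_pow, eval_X, eval_one, zero_pow hq] at h
  rwa [prod_neg, card_subfieldUnits hF, hsign, one_mul] at h

theorem natDegree_derivative_modByMonic_le {Φ : F[X]} (hdeg : Φ.natDegree ≤ q ^ 2 + q)
    (hdvd : X ^ q ^ 2 - X ∣ derivative Φ) :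
    (derivative (Φ %ₘ (X ^ q ^ 2 - X))).natDegree ≤ q := by
  have hq : q < q ^ 2 := by have := one_lt_of_card_eq_sq hF; nlinarith
  have hq1 := one_lt_of_card_eq_sq hF
  set W : F[X] := X ^ q ^ 2 - X with hW
  have hWdeg : W.natDegree = q ^ 2 := FiniteField.X_pow_card_sub_X_natDegree_eq F (by omega)
  have hWmonic : W.Monic := monic_X_pow_sub (by rw [degree_X]; exact_mod_cast (by omega))
  have hWder : derivative W = -1 := by
    simp [hW, derivative_X_pow, cast_eq_zero_of_card_eq_sq hF]
  have hquot : (Φ /ₘ W).natDegree ≤ q := by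
    rw [natDegree_divByMonic _ hWmonic, hWdeg]
    omega
  suffices heq : derivative (Φ %ₘ W) = Φ /ₘ W by rwa [heq]
  rw [← sub_eq_zero]
  have hdvd' : W ∣ derivative (Φ %ₘ W) - Φ /ₘ W := by
    have hder := congrArg derivative (modByMonic_add_div Φ W)
    rw [derivative_add, derivative_mul, hWder] at hder
    rw [show derivative (Φ %ₘ W) - Φ /ₘ W = derivative Φ - W * derivative (Φ /ₘ W) by
      linear_combination hder]
    exact dvd_sub hdvd (dvd_mul_right _ _)
  refine eq_zero_of_dvd_of_degree_lt hdvd' ((degree_sub_le _ _).trans_lt (max_lt ?_ ?_))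
  · exact degree_derivative_le.trans_lt (degree_modByMonic_lt _ hWmonic)
  · rw [degree_eq_natDegree hWmonic.ne_zero, hWdeg]
    exact degree_le_natDegree.trans_lt (by exact_mod_cast hquot.trans_lt hq)

end FieldOfSquareOrder

section RedeiPolynomial

open Finset Polynomial Lagrange

variable {F : Type*} [Field F] {q : ℕ} {f f' : F → F}

/-- A function on a field of order `q²` with values in the subfield of order `q`, vanishing exactly
on that subfield. -/
structure IsSubfieldWeight (q : ℕ) (f : F → F) : Prop where
  pow_eq : ∀ x, f x ^ q = f x
  eq_zero_iff : ∀ x, f x = 0 ↔ x ^ q = x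

/-- The polynomial in `m` whose value is the weighted norm `(m - c) ^ (q + 1) / f c`. -/
noncomputable def weightedNorm (q : ℕ) (f : F → F) (c : F) : F[X] :=
  C (f c)⁻¹ * (X - C c) ^ (q + 1)

theorem eval_weightedNorm (m c : F) :
    (weightedNorm q f c).eval m = (m - c) ^ (q + 1) / f c := by
  simp [weightedNorm, div_eq_inv_mul]

theorem derivative_weightedNorm [Fintype F] (hF : Fintype.card F = q ^ 2) (c : F) :
    derivative (weightedNorm q f c) = C (f c)⁻¹ * (X - C c) ^ q := by
  simp [weightedNorm, derivative_X_sub_C_pow, cast_eq_zero_of_card_eq_sq hF]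

variable [Fintype F] [DecidableEq F]

/-- The points `c` at weighted norm distance `β` from `m`. For a subfield weight `f` and `β ≠ 0`,
the convention `x / 0 = 0` excludes the elements `c` of the subfield. -/
def normFibre (q : ℕ) (f : F → F) (m β : F) : Finset F :=
  {c | (m - c) ^ (q + 1) / f c = β}

/-- A subfield weight `f` together with a subfield weight `f'` such that, for `m` outside the
subfield, `f' m` is the only value of the weighted norm from `m` that is attained exactly once,
all other values being attained equally often. -/
structure IsDualPair (q : ℕ) (f f' : F → F) : Prop where
  left : IsSubfieldWeight q f
  right : IsSubfieldWeight q f'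
  card_normFibre_of_eq : ∀ m, m ^ q = m → ∀ β ∈ subfieldUnits q F, #(normFibre q f m β) = q
  card_normFibre_of_ne : ∀ m, m ^ q ≠ m → ∀ β ∈ subfieldUnits q F,
    #(normFibre q f m β) = if β = f' m then 1 else q + 1

/-- The bivariate Rédei polynomial of a weight: it encodes, for each `m`, the multiset of weighted
norms from `m`. -/
noncomputable def redeiPoly (q : ℕ) (f : F → F) : F[X][X] :=
  nodal (offSubfield q F) (weightedNorm q f)

theorem map_redeiPoly (m : F) : (redeiPoly q f).map (evalRingHom m) =
    ∏ c ∈ offSubfield q F, (X - C ((m - c) ^ (q + 1) / f c)) := by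
  simp only [redeiPoly, nodal_eq, Polynomial.map_prod, Polynomial.map_sub, map_X, map_C,
    coe_evalRingHom, eval_weightedNorm]

theorem eval_coeff_redeiPoly (m : F) (i : ℕ) : ((redeiPoly q f).coeff i).eval m =
    (∏ c ∈ offSubfield q F, (X - C ((m - c) ^ (q + 1) / f c))).coeff i := by
  rw [← map_redeiPoly, coeff_map, coe_evalRingHom]

variable (hF : Fintype.card F = q ^ 2)
include hF

theorem IsSubfieldWeight.mem_subfieldUnits (hf : IsSubfieldWeight q f) {c : F} (hc : c ^ q ≠ c) :
    f c ∈ subfieldUnits q F :=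
  (_root_.mem_subfieldUnits hF).2 ⟨hf.pow_eq c, fun h ↦ hc ((hf.eq_zero_iff c).1 h)⟩

theorem norm_div_mem_subfieldUnits (hf : IsSubfieldWeight q f) {m c : F} (hc : c ^ q ≠ c)
    (hmc : c ≠ m) : (m - c) ^ (q + 1) / f c ∈ subfieldUnits q F := by
  have hnorm := pow_succ_mem_subfieldUnits hF (sub_ne_zero.2 hmc.symm)
  have hfc := hf.mem_subfieldUnits hF hc
  simp only [subfieldUnits, mem_filter, mem_univ, true_and] at hnorm hfc ⊢
  rw [div_pow, hnorm, hfc, div_one]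

theorem prod_norm_div_eq_prod_pow_card_normFibre {M : Type*} [CommMonoid M]
    (hf : IsSubfieldWeight q f) (φ : F → M) (m : F) :
    ∏ c ∈ (offSubfield q F).erase m, φ ((m - c) ^ (q + 1) / f c) =
      ∏ β ∈ subfieldUnits q F, φ β ^ #(normFibre q f m β) := by
  rw [← prod_fiberwise_of_maps_to' (t := subfieldUnits q F)]
  · refine prod_congr rfl fun β hβ ↦ ?_
    rw [prod_const]
    congr 2
    ext c
    simp only [mem_filter, mem_erase, mem_offSubfield, normFibre, mem_univ, true_and,
      and_iff_right_iff_imp]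
    rintro rfl
    have h0 := ((mem_subfieldUnits hF).1 hβ).2
    refine ⟨?_, fun hc ↦ h0 (by rw [(hf.eq_zero_iff c).2 hc, div_zero])⟩
    rintro rfl
    exact h0 (by simp)
  · intro c hc
    rw [mem_erase, mem_offSubfield] at hc
    exact norm_div_mem_subfieldUnits hF hf hc.2 hc.1

theorem nodal_subfieldUnits_pow : (nodal (subfieldUnits q F) id) ^ q = X ^ (q ^ 2 - q) - 1 := by
  rw [nodal_subfieldUnits hF, sub_pow_of_card_eq_sq hF, one_pow, ← pow_mul, Nat.sub_mul, one_mul,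
    ← sq]

theorem IsDualPair.map_redeiPoly_of_eq (h : IsDualPair q f f') {m : F} (hm : m ^ q = m) :
    ∏ c ∈ offSubfield q F, (X - C ((m - c) ^ (q + 1) / f c)) = X ^ (q ^ 2 - q) - 1 := by
  have hprod := prod_norm_div_eq_prod_pow_card_normFibre hF h.left (fun x ↦ X - C x) m
  rw [erase_eq_of_notMem (by simpa using hm)] at hprod
  rw [hprod, ← nodal_subfieldUnits_pow hF, nodal_eq, ← prod_pow]
  exact prod_congr rfl fun β hβ ↦ by rw [h.card_normFibre_of_eq m hm β hβ, id]

theorem IsDualPair.map_redeiPoly_of_ne (h : IsDualPair q f f') {m : F} (hm : m ^ q ≠ m) :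
    (∏ c ∈ offSubfield q F, (X - C ((m - c) ^ (q + 1) / f c))) * (X ^ q - C (f' m)) =
      (X ^ q - X) * (X ^ (q ^ 2 - q) - 1) := by
  have hmem := h.right.mem_subfieldUnits hF hm
  have hX : (X ^ q - X : F[X]) = X * nodal (subfieldUnits q F) id := by
    rw [nodal_subfieldUnits hF, mul_sub, mul_one, mul_pow_sub_one (one_lt_of_card_eq_sq hF).ne_bot]
  have hpow : (X ^ q - C (f' m) : F[X]) = (X - C (f' m)) ^ q := by
    rw [sub_pow_of_card_eq_sq hF, ← C_pow, h.right.pow_eq]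
  have hself : (m - m) ^ (q + 1) / f m = 0 := by simp
  rw [← mul_prod_erase _ _ (mem_offSubfield.2 hm), hself, map_zero, sub_zero,
    prod_norm_div_eq_prod_pow_card_normFibre hF h.left (fun x ↦ X - C x) m, hpow, hX,
    ← nodal_subfieldUnits_pow hF, mul_assoc, mul_assoc, ← pow_succ', nodal_eq, ← prod_pow,
    ← mul_prod_erase _ _ hmem, ← mul_prod_erase _ _ hmem, h.card_normFibre_of_ne m hm _ hmem,
    if_pos rfl, pow_one, mul_right_comm (X - C (f' m)), ← pow_succ', id]
  congr 2
  refine prod_congr rfl fun β hβ ↦ ?_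
  rw [mem_erase] at hβ
  rw [h.card_normFibre_of_ne m hm β hβ.2, if_neg hβ.1, id]

omit [Fintype F] [DecidableEq F] hF in
theorem coeff_of_mul_X_pow_sub_C_eq (hq : 2 < q) {R : F[X]} (hR : R.Monic)
    (hdeg : R.natDegree = q ^ 2 - q) {b : F}
    (hmul : R * (X ^ q - C b) = (X ^ q - X) * (X ^ (q ^ 2 - q) - 1)) :
    (∀ l, 1 ≤ l → l ≤ q - 2 → R.coeff (q ^ 2 - q - l) = 0) ∧ R.coeff (q ^ 2 - q - q) = b := by
  have hqq : 3 * q ≤ q ^ 2 := by nlinarith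
  have hrhs : ((X ^ q - X) * (X ^ (q ^ 2 - q) - 1) : F[X]) =
      X ^ q ^ 2 - X ^ (q ^ 2 - q + 1) - X ^ q + X ^ 1 := by
    rw [← Nat.sub_add_cancel (show q ≤ q ^ 2 by omega), Nat.add_sub_cancel]
    ring
  have hcoeff : ∀ k, R.coeff k - b * R.coeff (k + q) =
      (X ^ q ^ 2 - X ^ (q ^ 2 - q + 1) - X ^ q + X ^ 1 : F[X]).coeff (k + q) := fun k ↦ by
    rw [← hrhs, ← hmul, mul_sub, coeff_sub, coeff_mul_X_pow, coeff_mul_C, mul_comm]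
  simp only [coeff_add, coeff_sub, coeff_X_pow] at hcoeff
  refine ⟨fun l hl hlq ↦ ?_, ?_⟩
  · have h := hcoeff (q ^ 2 - q - l)
    rw [coeff_eq_zero_of_natDegree_lt (n := q ^ 2 - q - l + q) (by omega), if_neg (by omega),
      if_neg (by omega), if_neg (by omega), if_neg (by omega)] at h
    simpa using h
  · have h := hcoeff (q ^ 2 - q - q)
    rw [Nat.sub_add_cancel (show q ≤ q ^ 2 - q by omega), ← hdeg, hR.coeff_natDegree, hdeg,
      if_neg (by omega), if_neg (by omega), if_neg (by omega), if_neg (by omega)] at h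
    simpa [sub_eq_zero] using h

theorem IsDualPair.eval_coeff_redeiPoly (h : IsDualPair q f f') (hq : 2 < q) (m : F) :
    (∀ l, 1 ≤ l → l ≤ q - 2 → ((redeiPoly q f).coeff (q ^ 2 - q - l)).eval m = 0) ∧
      ((redeiPoly q f).coeff (q ^ 2 - q - q)).eval m = f' m := by
  simp only [_root_.eval_coeff_redeiPoly]
  by_cases hm : m ^ q = m
  · have hqq : 3 * q ≤ q ^ 2 := by nlinarith
    have hcoeff : ∀ l, 1 ≤ l → l ≤ q → (X ^ (q ^ 2 - q) - 1 : F[X]).coeff (q ^ 2 - q - l) = 0 :=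
      fun l hl hlq ↦ by
        rw [coeff_sub, coeff_X_pow, coeff_one, if_neg (by omega), if_neg (by omega), sub_zero]
    rw [h.map_redeiPoly_of_eq hF hm, (h.right.eq_zero_iff m).2 hm]
    exact ⟨fun l hl hlq ↦ hcoeff l hl (by omega), hcoeff q (by omega) le_rfl⟩
  · refine coeff_of_mul_X_pow_sub_C_eq hq (monic_prod_X_sub_C _ _) ?_ (h.map_redeiPoly_of_ne hF hm)
    rw [natDegree_finsetProd_X_sub_C_eq_card, card_offSubfield hF]

theorem natDegree_coeff_redeiPoly_le {l : ℕ} (hl : l ≤ q ^ 2 - q) :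
    ((redeiPoly q f).coeff (q ^ 2 - q - l)).natDegree ≤ l * (q + 1) := by
  have hle := natDegree_coeff_nodal_le (s := offSubfield q F) (v := weightedNorm q f) (d := q + 1)
    (fun c _ ↦ (natDegree_C_mul_le _ _).trans (by rw [natDegree_pow, natDegree_X_sub_C, mul_one]))
    (q ^ 2 - q - l)
  rwa [card_offSubfield hF, Nat.sub_sub_self hl] at hle

theorem IsDualPair.coeff_redeiPoly_eq_zero (h : IsDualPair q f f') (hq : 2 < q) (l : ℕ)
    (hl : 1 ≤ l) (hlq : l ≤ q - 2) : (redeiPoly q f).coeff (q ^ 2 - q - l) = 0 := by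
  refine eq_zero_of_natDegree_lt_card_of_eval_eq_zero' _ univ
    (fun m _ ↦ (h.eval_coeff_redeiPoly hF hq m).1 l hl hlq) ?_
  have hqq : 3 * q ≤ q ^ 2 := by nlinarith
  rw [card_univ, hF]
  refine (natDegree_coeff_redeiPoly_le hF (by omega)).trans_lt ?_
  obtain ⟨k, rfl⟩ : ∃ k, q = k + 2 := ⟨q - 2, by omega⟩
  have : l ≤ k := by omega
  nlinarith

theorem IsSubfieldWeight.derivative_weightedNorm_mul_pow (hf : IsSubfieldWeight q f) {c : F}
    (hc : c ∈ offSubfield q F) :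
    derivative (weightedNorm q f c) * weightedNorm q f c ^ (q - 1) =
      (X ^ q ^ 2 - X) * (C (f c)⁻¹ * (X - C c) ^ (q - 1)) + derivative (weightedNorm q f c) := by
  have hfc : (f c)⁻¹ ^ (q - 1) = 1 := by
    have := hf.mem_subfieldUnits hF (mem_offSubfield.1 hc)
    rw [subfieldUnits, mem_filter] at this
    rw [inv_pow, this.2, inv_one]
  have hfrob : (X - C c : F[X]) ^ q ^ 2 = X ^ q ^ 2 - C c := by
    rw [sq, pow_mul, sub_pow_of_card_eq_sq hF, sub_pow_of_card_eq_sq hF, ← C_pow, ← C_pow,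
      pow_pow_of_card_eq_sq hF, ← pow_mul]
  obtain ⟨k, rfl⟩ : ∃ k, q = k + 1 := ⟨q - 1, by have := one_lt_of_card_eq_sq hF; omega⟩
  have hpow : ∀ y : F[X], y ^ (k + 1) * (y ^ (k + 1 + 1)) ^ k = y ^ (k + 1) ^ 2 * y ^ k :=
    fun y ↦ by ring
  rw [derivative_weightedNorm hF, weightedNorm, mul_pow, ← C_pow, hfc, C_1, one_mul,
    Nat.add_sub_cancel, mul_assoc, hpow, hfrob]
  ring

theorem IsDualPair.X_pow_sub_X_dvd_derivative_coeff (h : IsDualPair q f f') (hq : 2 < q) :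
    X ^ q ^ 2 - X ∣ derivative ((redeiPoly q f).coeff (q ^ 2 - q - q)) := by
  have hqq : 3 * q ≤ q ^ 2 := by nlinarith
  have hcard := card_offSubfield hF
  have hD : ∀ k, derivative ((redeiPoly q f).coeff k) = -∑ c ∈ offSubfield q F,
      derivative (weightedNorm q f c) *
        (nodal ((offSubfield q F).erase c) (weightedNorm q f)).coeff k :=
    derivation_coeff_nodal derivative' _ _
  have herase : ∀ c ∈ offSubfield q F, ∀ l ≤ q - 2,
      (nodal ((offSubfield q F).erase c) (weightedNorm q f)).coeff (q ^ 2 - q - 1 - l) =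
        weightedNorm q f c ^ l := fun c hc l hl ↦ by
    rw [← hcard] at ⊢
    refine coeff_nodal_erase_of_coeff_nodal_eq_zero (by omega) (fun l hl hlq ↦ ?_) hc l hl
    rw [hcard]
    exact h.coeff_redeiPoly_eq_zero hF hq l hl hlq
  have hsum : ∑ c ∈ offSubfield q F, derivative (weightedNorm q f c) = 0 := by
    have h1 := hD (q ^ 2 - q - 1)
    rw [h.coeff_redeiPoly_eq_zero hF hq 1 le_rfl (by omega), derivative_zero, zero_eq_neg] at h1
    rw [← h1]
    exact sum_congr rfl fun c hc ↦ by rw [← Nat.sub_zero (q ^ 2 - q - 1),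
      herase c hc 0 (Nat.zero_le _), pow_zero, mul_one]
  have hlast : ∀ c ∈ offSubfield q F,
      (nodal ((offSubfield q F).erase c) (weightedNorm q f)).coeff (q ^ 2 - q - q) =
        (redeiPoly q f).coeff (q ^ 2 - q - q + 1) + weightedNorm q f c ^ (q - 1) := fun c hc ↦ by
    rw [redeiPoly, nodal_eq_mul_nodal_erase hc, coeff_X_sub_C_mul,
      show q ^ 2 - q - q + 1 = q ^ 2 - q - 1 - (q - 2) by omega, herase c hc _ le_rfl, ← pow_succ',
      show q - 2 + 1 = q - 1 by omega, sub_add_cancel]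
  rw [hD, sum_congr rfl fun c hc ↦ by rw [hlast c hc, mul_add,
    h.left.derivative_weightedNorm_mul_pow hF hc], sum_add_distrib, sum_add_distrib, ← sum_mul,
    hsum, zero_mul, zero_add, add_zero, ← mul_sum, dvd_neg]
  exact dvd_mul_right _ _

theorem IsDualPair.exists_polynomial (h : IsDualPair q f f') (hq : 2 < q) :
    ∃ P : F[X], P.degree < (q ^ 2 : ℕ) ∧ (∀ x, P.eval x = f' x) ∧
      (derivative P).natDegree ≤ q := by
  have hqq : 3 * q ≤ q ^ 2 := by nlinarith
  have hmonic : (X ^ q ^ 2 - X : F[X]).Monic :=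
    monic_X_pow_sub (by rw [degree_X]; exact_mod_cast (by omega))
  refine ⟨(redeiPoly q f).coeff (q ^ 2 - q - q) %ₘ (X ^ q ^ 2 - X), ?_, fun x ↦ ?_,
    natDegree_derivative_modByMonic_le hF ?_ (h.X_pow_sub_X_dvd_derivative_coeff hF hq)⟩
  · refine (degree_modByMonic_lt _ hmonic).trans_eq ?_
    rw [degree_eq_natDegree hmonic.ne_zero,
      FiniteField.X_pow_card_sub_X_natDegree_eq F (show 1 < q ^ 2 by omega)]
  · have hroot : (X ^ q ^ 2 - X : F[X]).IsRoot x := by simp [← hF, FiniteField.pow_card]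
    rw [modByMonic_eq_sub_mul_div, eval_sub, eval_mul, hroot.eq_zero, zero_mul, sub_zero]
    exact (h.eval_coeff_redeiPoly hF hq x).2
  · exact (natDegree_coeff_redeiPoly_le hF (by omega)).trans (by rw [mul_add, mul_one, sq])

end RedeiPolynomial

section CoefficientsOverFiniteFields

open Finset Polynomial

theorem exists_isPrimitiveRoot_of_dvd {F : Type*} [Field F] [Fintype F] {n : ℕ}
    (hn : n ∣ Fintype.card F - 1) : ∃ w : F, IsPrimitiveRoot w n := by
  obtain ⟨g, hg⟩ := IsCyclic.exists_generator (α := Fˣ)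
  have hg' : IsPrimitiveRoot g (Fintype.card F - 1) := by
    classical
    rw [← Fintype.card_units, ← Nat.card_eq_fintype_card,
      ← orderOf_eq_card_of_forall_mem_zpowers hg]
    exact IsPrimitiveRoot.orderOf g
  have hcard : 0 < Fintype.card F - 1 := by have := Fintype.one_lt_card (α := F); omega
  obtain ⟨d, hd⟩ := hn
  exact ⟨(g : F) ^ d, (IsPrimitiveRoot.coe_units_iff.2 hg').pow hcard (hd.trans (mul_comm _ _))⟩

theorem sum_pow_eq_ite {F : Type*} [Field F] [Fintype F] (k : ℕ) :
    ∑ x : F, x ^ k = if 0 < k ∧ Fintype.card F - 1 ∣ k then -1 else 0 := by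
  classical
  rcases k.eq_zero_or_pos with rfl | hk
  · simp
  · have hzero : ∑ x : {x : F // ¬x ≠ 0}, (x : F) ^ k = 0 :=
      Fintype.sum_eq_zero _ fun x ↦ by rw [not_not.1 x.2, zero_pow hk.ne']
    rw [← Fintype.sum_subtype_add_sum_subtype (· ≠ 0), hzero, ← unitsEquivNeZero.sum_comp]
    simp [FiniteField.sum_pow_units, hk]

theorem sum_eval_mul_pow {F : Type*} [Field F] [Fintype F] (P : F[X]) (m : ℕ) :
    ∑ x : F, P.eval x * x ^ m =
      -∑ e ∈ P.support with 0 < e + m ∧ Fintype.card F - 1 ∣ e + m, P.coeff e := by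
  simp_rw [eval_eq_sum, Polynomial.sum, sum_mul, mul_assoc, ← pow_add]
  rw [sum_comm, sum_filter, ← sum_neg_distrib]
  refine sum_congr rfl fun e _ ↦ ?_
  rw [← mul_sum, sum_pow_eq_ite]
  split_ifs <;> simp

theorem sum_eval_mul_pow_of_degree_lt {F : Type*} [Field F] [Fintype F] {P : F[X]}
    (hP : P.degree < Fintype.card F) {e : ℕ} (he : 1 ≤ e) (he' : e < Fintype.card F) :
    ∑ x : F, P.eval x * x ^ (Fintype.card F - 1 - e) = -P.coeff e := by
  rw [sum_eval_mul_pow, sum_filter, sum_eq_single e]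
  · rw [if_pos ⟨by omega, by rw [show e + (Fintype.card F - 1 - e) = Fintype.card F - 1 by omega]⟩]
  · intro d hd hde
    have hlt : d < Fintype.card F := by
      exact_mod_cast (le_degree_of_mem_supp d hd).trans_lt hP
    refine if_neg fun ⟨_, k, hk⟩ ↦ hde ?_
    have hk1 : k = 1 := by
      rcases k with _ | _ | k
      · omega
      · rfl
      · have := Nat.mul_le_mul_left (Fintype.card F - 1) (show 2 ≤ k + 1 + 1 by omega)
        omega
    rw [hk1] at hk
    omega
  · intro h
    rw [notMem_support_iff.1 h, ite_self]

theorem coeff_pow_eq_coeff_of_modEq {F : Type*} [Field F] [Fintype F] {q : ℕ}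
    (hF : Fintype.card F = q ^ 2) {P : F[X]} (hP : P.degree < (q ^ 2 : ℕ))
    (hpow : ∀ x, P.eval x ^ q = P.eval x) (hzero : P.eval 0 = 0) {d e : ℕ} (hd : 1 ≤ d)
    (hd' : d < q ^ 2) (he : 1 ≤ e) (he' : e < q ^ 2) (hde : q * d ≡ e [MOD q ^ 2 - 1]) :
    P.coeff d ^ q = P.coeff e := by
  have hq := one_lt_of_card_eq_sq hF
  have hneg (a : F) : (-a) ^ q = -a ^ q := by
    rw [neg_pow, neg_one_pow_of_card_eq_sq hF, neg_one_mul]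
  have hexp : q * (q ^ 2 - 1 - d) ≡ q ^ 2 - 1 - e [MOD q ^ 2 - 1] := by
    refine Nat.ModEq.add_right_cancel hde ?_
    rw [← mul_add, Nat.sub_add_cancel (by omega), Nat.sub_add_cancel (by omega)]
    exact ((Nat.modEq_zero_iff_dvd.2 (dvd_mul_left _ _)).trans
      (Nat.modEq_zero_iff_dvd.2 dvd_rfl).symm)
  rw [← hF] at hP hd' he' hexp
  rw [← neg_inj, ← hneg, ← sum_eval_mul_pow_of_degree_lt hP hd hd', sum_pow_of_card_eq_sq hF,
    ← sum_eval_mul_pow_of_degree_lt hP he he']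
  refine sum_congr rfl fun x _ ↦ ?_
  rcases eq_or_ne x 0 with rfl | hx
  · rw [hzero, zero_mul, zero_mul, zero_pow (by omega)]
  have hx1 := FiniteField.pow_card_sub_one_eq_one x hx
  have hfin : IsOfFinOrder x :=
    isOfFinOrder_iff_pow_eq_one.2 ⟨_, by have := Fintype.one_lt_card (α := F); omega, hx1⟩
  rw [mul_pow, hpow, ← pow_mul, mul_comm _ q,
    hfin.pow_eq_pow_iff_modEq.2 (hexp.of_dvd (orderOf_dvd_of_pow_eq_one hx1))]

theorem dvd_or_le_of_coeff_ne_zero {R : Type*} [CommRing R] [IsDomain R] {p d e : ℕ} [CharP R p]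
    {P : R[X]} (hP : (derivative P).natDegree ≤ d) (he : P.coeff e ≠ 0) : p ∣ e ∨ e ≤ d + 1 := by
  by_contra! hcon
  have hcoeff : (derivative P).coeff (e - 1) = 0 := coeff_eq_zero_of_natDegree_lt (by omega)
  rw [coeff_derivative, ← Nat.cast_add_one, Nat.sub_add_cancel (by omega)] at hcoeff
  exact hcon.1 ((CharP.cast_eq_zero_iff R p e).1 ((mul_eq_zero.1 hcoeff).resolve_left he))

theorem modEq_of_coeff_ne_zero {F : Type*} [Field F] {w : F} {n s e : ℕ} (hn : 0 < n)
    (hw : IsPrimitiveRoot w n) {P : F[X]} (hP : P.comp (C w * X) = C (w ^ s) * P)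
    (he : P.coeff e ≠ 0) : e ≡ s [MOD n] := by
  have hcoeff := congrArg (coeff · e) hP
  simp only [comp_C_mul_X_coeff, coeff_C_mul, mul_comm (P.coeff e)] at hcoeff
  have hfin : IsOfFinOrder w := isOfFinOrder_iff_pow_eq_one.2 ⟨n, hn, hw.pow_eq_one⟩
  rw [hw.eq_orderOf]
  exact hfin.pow_eq_pow_iff_modEq.1 (mul_right_cancel₀ he hcoeff)

theorem exists_eq_C_mul_pow_of_mul_eq_pow {F : Type*} [Field F] {P c c' : F[X]} (hP : Prime P)
    {T : ℕ} (hc : c.natDegree ≤ T * P.natDegree) (hc' : c'.natDegree ≤ T * P.natDegree)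
    (h : c * c' = P ^ (2 * T)) : ∃ b ≠ 0, c = C b * P ^ T := by
  have hne : c * c' ≠ 0 := h ▸ pow_ne_zero _ hP.ne_zero
  have hdeg : c.natDegree + c'.natDegree = 2 * T * P.natDegree := by
    rw [← natDegree_mul (left_ne_zero_of_mul hne) (right_ne_zero_of_mul hne), h, natDegree_pow]
  obtain ⟨i, -, hassoc⟩ := (dvd_prime_pow hP (2 * T)).1 ⟨c', h.symm⟩
  have hiT : i = T := by
    have hi := natDegree_eq_of_degree_eq (degree_eq_degree_of_associated hassoc)
    rw [natDegree_pow] at hi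
    have hpos := hP.irreducible.natDegree_pos
    refine Nat.eq_of_mul_eq_mul_right hpos ?_
    nlinarith
  obtain ⟨u, hu⟩ := hassoc.symm
  obtain ⟨b, hb, hbu⟩ := isUnit_iff.1 u.isUnit
  exact ⟨b, hb.ne_zero, by rw [← hu, ← hbu, hiT, mul_comm]⟩

end CoefficientsOverFiniteFields

section SparseForms

open Finset Polynomial

variable {F : Type*} [Field F] {q : ℕ}

/-- Homogeneity of degree `s` under scaling by the nonzero elements of the subfield of order `q`. -/
def IsSubfieldHomogeneous (q s : ℕ) (f : F → F) : Prop :=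
  ∀ l, l ^ (q - 1) = 1 → ∀ x, f (l * x) = l ^ s * f x

/-- A reduced polynomial over a field of order `q²` whose values lie in the subfield of order `q`,
homogeneous of degree `s` over that subfield, with derivative of degree at most `q`. -/
structure IsSparseForm (q s : ℕ) (P : F[X]) : Prop where
  degree_lt : P.degree < (q ^ 2 : ℕ)
  pow_eq : ∀ x, P.eval x ^ q = P.eval x
  eval_zero : P.eval 0 = 0
  natDegree_derivative_le : (derivative P).natDegree ≤ q
  homogeneous : IsSubfieldHomogeneous q s P.eval

theorem IsSparseForm.coeff_lt {s e : ℕ} {P : F[X]} (h : IsSparseForm q s P) (he : P.coeff e ≠ 0) :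
    e < q ^ 2 := by
  exact_mod_cast (le_degree_of_ne_zero he).trans_lt h.degree_lt

variable [Fintype F] (hF : Fintype.card F = q ^ 2)
include hF

theorem exists_isPrimitiveRoot_sub_one : ∃ w : F, IsPrimitiveRoot w (q - 1) :=
  exists_isPrimitiveRoot_of_dvd <| by
    rw [hF, ← one_pow 2, Nat.sq_sub_sq]
    exact dvd_mul_left _ _

theorem exists_pow_sub_one_eq {z : F} (hz : z ^ (q + 1) = 1) : ∃ x ≠ 0, x ^ (q - 1) = z := by
  have hq := one_lt_of_card_eq_sq hF
  obtain ⟨w, hw⟩ := exists_isPrimitiveRoot_of_dvd (dvd_refl (Fintype.card F - 1))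
  rw [hF, ← one_pow 2, Nat.sq_sub_sq] at hw
  have hpos : 0 < (q + 1) * (q - 1) := Nat.mul_pos (by omega) (by omega)
  obtain ⟨i, -, rfl⟩ := (hw.pow hpos (mul_comm _ _)).eq_pow_of_pow_eq_one hz
  exact ⟨w ^ i, pow_ne_zero _ (hw.ne_zero hpos.ne'), by rw [← pow_mul, ← pow_mul, mul_comm]⟩

theorem IsSparseForm.modEq {s e : ℕ} {P : F[X]} (h : IsSparseForm q s P) (he : P.coeff e ≠ 0) :
    e ≡ s [MOD q - 1] := by
  have hq := one_lt_of_card_eq_sq hF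
  obtain ⟨w, hw⟩ := exists_isPrimitiveRoot_sub_one hF
  refine modEq_of_coeff_ne_zero (by omega) hw ?_ he
  refine eq_of_degree_sub_lt_of_eval_finset_eq univ ?_ fun x _ ↦ ?_
  · rw [card_univ, hF, degree_lt_iff_coeff_zero]
    intro m hm
    have hzero : P.coeff m = 0 := coeff_eq_zero_of_degree_lt (h.degree_lt.trans_le (mod_cast hm))
    rw [coeff_sub, comp_C_mul_X_coeff, coeff_C_mul, hzero, zero_mul, mul_zero, sub_zero]
  · simpa only [eval_comp, eval_mul, eval_C, eval_X] using h.homogeneous w hw.pow_eq_one x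

theorem IsSparseForm.dvd_or_eq {p s e : ℕ} [CharP F p] (hs : 1 ≤ s) (hs2 : s ≠ 2)
    (hsq : s ≤ q - 2) {P : F[X]} (h : IsSparseForm q s P) (he : P.coeff e ≠ 0) :
    p ∣ e ∨ e = s := by
  have hq := one_lt_of_card_eq_sq hF
  have hpq : p ∣ q := (CharP.cast_eq_zero_iff F p q).1 (cast_eq_zero_of_card_eq_sq hF)
  refine or_iff_not_imp_left.2 fun hpe ↦ ?_
  have hle := (dvd_or_le_of_coeff_ne_zero h.natDegree_derivative_le he).resolve_left hpe
  have hmod := h.modEq hF he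
  have hne : e ≠ q := fun heq ↦ hpe (heq ▸ hpq)
  rcases le_total e s with hes | hes
  · have hdvd := (Nat.modEq_iff_dvd' hes).1 hmod
    have := Nat.eq_zero_of_dvd_of_lt hdvd (by omega)
    omega
  · obtain ⟨t, ht⟩ := (Nat.modEq_iff_dvd' hes).1 hmod.symm
    rcases t with _ | _ | t
    · omega
    · omega
    · have := Nat.mul_le_mul_left (q - 1) (show 2 ≤ t + 1 + 1 by omega)
      omega

theorem IsSparseForm.exists_exponent {p T e : ℕ} [CharP F p] (hp : 1 < p) (hT : p * T = q)
    (hq : 2 < q) {P : F[X]} (h : IsSparseForm q 1 P) (he : P.coeff e ≠ 0) :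
    ∃ k ≤ T, ∀ x : F, x ^ e * x ^ ((q - 1) * (p * k)) = x := by
  rcases h.dvd_or_eq hF le_rfl (by omega) (by omega) he (p := p) with hpe | rfl
  swap
  · exact ⟨0, T.zero_le, fun x ↦ by simp⟩
  have hlt := h.coeff_lt he
  obtain ⟨m, hm⟩ : q - 1 ∣ q ^ 2 - e := by
    refine (Nat.modEq_iff_dvd' hlt.le).1 ((h.modEq hF he).trans ?_)
    refine (Nat.modEq_iff_dvd' (by nlinarith)).2 ?_
    rw [← one_pow 2, Nat.sq_sub_sq]
    exact dvd_mul_left _ _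
  have hpq : p ∣ q := ⟨T, hT.symm⟩
  obtain ⟨k, rfl⟩ : p ∣ m := by
    have hdvd : p ∣ (q - 1) * m := hm ▸ Nat.dvd_sub (hpq.trans (dvd_pow_self q two_ne_zero)) hpe
    have hcop : Nat.Coprime p (q - 1) := by
      refine Nat.Coprime.coprime_dvd_left hpq ?_
      exact Nat.coprime_self_sub_right (by omega) |>.2 (Nat.coprime_one_right q)
    exact hcop.dvd_of_dvd_mul_left hdvd
  refine ⟨k, ?_, fun x ↦ ?_⟩
  · have hpos : 1 ≤ e := Nat.pos_of_ne_zero fun h0 ↦ he (by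
      rw [h0, coeff_zero_eq_eval_zero, h.eval_zero])
    have hle : (q - 1) * (p * k) ≤ (q - 1) * (p * T + 1) := by
      rw [hT, ← hm, mul_comm, ← Nat.sq_sub_sq, one_pow]
      omega
    have := Nat.le_of_mul_le_mul_left hle (by omega)
    by_contra hk
    have := Nat.mul_le_mul_left p (show T + 1 ≤ k by omega)
    rw [mul_add] at this
    omega
  · rw [← pow_add, ← hm, Nat.add_sub_cancel' hlt.le, ← hF, FiniteField.pow_card]

theorem IsSparseForm.exists_eval_eq {p T : ℕ} [CharP F p] (hp : 1 < p) (hT : p * T = q)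
    (hq : 2 < q) {P : F[X]} (h : IsSparseForm q 1 P) :
    ∃ c : F[X], c.natDegree ≤ T ∧
      ∀ x u : F, u ^ (q + 1) = 1 → u ^ T = x ^ (q - 1) → P.eval x = x * c.eval u := by
  have hexp (e : ℕ) : P.coeff e ≠ 0 → ∃ k ≤ T, ∀ x : F, x ^ e * x ^ ((q - 1) * (p * k)) = x :=
    h.exists_exponent hF hp hT hq
  choose! k hkT hk using hexp
  refine ⟨∑ e ∈ P.support, C (P.coeff e) * X ^ k e, ?_, fun x u hu hux ↦ ?_⟩
  · exact natDegree_sum_le_of_forall_le _ _ fun e he ↦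
      (natDegree_C_mul_X_pow_le _ _).trans (hkT e (mem_support_iff.1 he))
  rw [eval_eq_sum, Polynomial.sum, eval_finsetSum, mul_sum]
  refine sum_congr rfl fun e he ↦ ?_
  have hxe : x ^ e = x * u ^ k e := by
    have hinv : x ^ ((q - 1) * (p * k e)) * u ^ k e = 1 := by
      rw [pow_mul, ← hux, ← pow_mul, ← mul_assoc, mul_comm T, hT, ← pow_add, ← Nat.succ_mul,
        pow_mul, hu, one_pow]
    calc x ^ e = x ^ e * x ^ ((q - 1) * (p * k e)) * u ^ k e := by rw [mul_assoc, hinv, mul_one]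
      _ = x * u ^ k e := by rw [hk e (mem_support_iff.1 he)]
  simp only [eval_mul, eval_C, eval_pow, eval_X, hxe]
  ring

theorem mul_eq_X_sub_one_pow {p n : ℕ} [Fact p.Prime] [CharP F p] {c c' : F[X]}
    (hn : 2 * p ^ n ≤ q) (hc : c.natDegree ≤ p ^ n) (hc' : c'.natDegree ≤ p ^ n)
    (heval : ∀ u, u ^ (q + 1) = 1 → c.eval u * c'.eval u = (u ^ p ^ n - 1) ^ 2) :
    c * c' = (X - C 1) ^ (2 * p ^ n) := by
  classical
  refine eq_of_degree_sub_lt_of_eval_finset_eq {u : F | u ^ (q + 1) = 1} ?_ fun u hu ↦ ?_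
  · rw [card_filter_pow_succ_eq hF (by simp [subfieldUnits])]
    refine (degree_sub_le _ _).trans_lt (max_lt ?_ ?_)
    · refine degree_le_natDegree.trans_lt (Nat.cast_lt.2 (natDegree_mul_le.trans_lt ?_))
      omega
    · rw [degree_pow, degree_X_sub_C, nsmul_one]
      exact Nat.cast_lt.2 (by omega)
  · rw [eval_mul, heval u (mem_filter.1 hu).2, mul_comm 2, pow_mul, eval_pow, eval_pow, eval_sub,
      eval_X, eval_C, sub_pow_char_pow, one_pow]

theorem IsSparseForm.exists_eval_eq_mul_pow_sub {P P' : F[X]} (hq : 2 < q)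
    (h : IsSparseForm q 1 P) (h' : IsSparseForm q 1 P')
    (hmul : ∀ x, P.eval x * P'.eval x = (x ^ q - x) ^ 2) :
    ∃ b ≠ 0, ∀ x, P.eval x = b * (x ^ q - x) := by
  obtain ⟨p, n, hp, hchar, hn, hpn⟩ := exists_charP_of_card_eq_sq hF
  have := Fact.mk hp
  have hT : p * p ^ (n - 1) = q := by rw [hpn, mul_pow_sub_one hn]
  obtain ⟨c, hc, hPc⟩ := h.exists_eval_eq hF hp.one_lt hT hq
  obtain ⟨c', hc', hPc'⟩ := h'.exists_eval_eq hF hp.one_lt hT hq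
  have hxq (x : F) : x ^ q = x * x ^ (q - 1) := (mul_pow_sub_one (by omega) x).symm
  have hcc' : c * c' = (X - C 1) ^ (2 * p ^ (n - 1)) := by
    refine mul_eq_X_sub_one_pow hF (hT ▸ Nat.mul_le_mul_right _ hp.two_le) hc hc' fun u hu ↦ ?_
    obtain ⟨x, hx, hxu⟩ : ∃ x ≠ 0, x ^ (q - 1) = u ^ p ^ (n - 1) :=
      exists_pow_sub_one_eq hF (by rw [← pow_mul, mul_comm, pow_mul, hu, one_pow])
    have hmulx := hmul x
    rw [hPc x u hu hxu.symm, hPc' x u hu hxu.symm, hxq, hxu] at hmulx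
    exact mul_left_cancel₀ (pow_ne_zero 2 hx) (by linear_combination hmulx)
  obtain ⟨b, hb, rfl⟩ := exists_eq_C_mul_pow_of_mul_eq_pow (prime_X_sub_C 1)
    (by rwa [natDegree_X_sub_C, mul_one]) (by rwa [natDegree_X_sub_C, mul_one]) hcc'
  refine ⟨b, hb, fun x ↦ ?_⟩
  rcases eq_or_ne x 0 with rfl | hx
  · rw [h.eval_zero, zero_pow (by omega), sub_zero, mul_zero]
  have hz : (x ^ (q - 1)) ^ (q + 1) = 1 := by
    rw [← pow_mul, mul_comm, ← Nat.sq_sub_sq, one_pow, ← hF]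
    exact FiniteField.pow_card_sub_one_eq_one x hx
  have huT : ((x ^ (q - 1)) ^ (q * p)) ^ p ^ (n - 1) = x ^ (q - 1) := by
    rw [← pow_mul, mul_assoc, hT, pow_mul, pow_pow_of_card_eq_sq hF]
  rw [hPc x _ (by rw [← pow_mul, mul_comm, pow_mul, hz, one_pow]) huT, eval_mul, eval_C, eval_pow,
    eval_sub, eval_X, eval_C, sub_pow_char_pow, one_pow, huT, hxq]
  ring

theorem IsSparseForm.coeff_eq_zero_of_not_dvd {p s s' e : ℕ} [CharP F p] (hs : 3 ≤ s)
    (hsq : s ≤ q - 2) (hss' : s + s' = q + 1) {P P' : F[X]} (h : IsSparseForm q s P)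
    (h' : IsSparseForm q s' P') (hpe : ¬p ∣ e) (he : P.coeff e ≠ 0) :
    P'.coeff (q ^ 2 + 1 - e) = 0 := by
  by_contra he'
  obtain rfl := (h.dvd_or_eq hF (by omega) (by omega) hsq he).resolve_left hpe
  have hpq : p ∣ q := (CharP.cast_eq_zero_iff F p q).1 (cast_eq_zero_of_card_eq_sq hF)
  -- the base-`q` digits of `q² + 1 - e` are `s'` and `q - 1`; swapping them gives `q s' + q - 1`
  have hqq : q * (q - 1) + q = q ^ 2 := by rw [← Nat.mul_succ, sq]; congr 1; omega
  have hqs : q * s' + q ≤ q * (q - 1) := by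
    rw [← Nat.mul_succ]
    exact Nat.mul_le_mul_left q (by omega)
  have hmod : q * (q ^ 2 + 1 - e) ≡ q * s' + (q - 1) [MOD q ^ 2 - 1] := by
    rw [show q ^ 2 + 1 - e = s' + (q - 1) * q by rw [mul_comm]; omega, mul_add]
    refine Nat.ModEq.add_left _ ?_
    rw [mul_left_comm, ← sq]
    have h1 : q ^ 2 ≡ 1 [MOD q ^ 2 - 1] := (Nat.modEq_iff_dvd' (by omega)).2 dvd_rfl |>.symm
    simpa using h1.mul_left (q - 1)
  have hswap := coeff_pow_eq_coeff_of_modEq hF h'.degree_lt h'.pow_eq h'.eval_zero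
    (by omega) (by omega) (by omega) (by omega) hmod
  have hne : P'.coeff (q * s' + (q - 1)) ≠ 0 := hswap ▸ pow_ne_zero q he'
  rcases h'.dvd_or_eq hF (by omega) (by omega) (by omega) hne (p := p) with hdvd | heq
  · have h1 := (Nat.dvd_add_right (hpq.mul_right s')).1 hdvd
    have hone : p ∣ 1 := (Nat.dvd_add_right h1).1 (by rwa [Nat.sub_add_cancel (by omega)])
    exact hpe (hone.trans (one_dvd e))
  · have := Nat.mul_le_mul_right s' (show 3 ≤ q by omega)
    omega

theorem IsSparseForm.coeff_mul_coeff_eq_zero {s s' a b : ℕ} (hs : 3 ≤ s) (hsq : s ≤ q - 2)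
    (hss' : s + s' = q + 1) {P P' : F[X]} (h : IsSparseForm q s P) (h' : IsSparseForm q s' P')
    (hab : q ^ 2 - 1 ∣ a + b + (q ^ 2 - 3)) : P.coeff a * P'.coeff b = 0 := by
  obtain ⟨p, n, hp, hchar, -⟩ := exists_charP_of_card_eq_sq hF
  have hq : 5 * q ≤ q ^ 2 := by nlinarith [show 5 ≤ q by omega]
  by_contra hne
  obtain ⟨hPa, hPb⟩ := mul_ne_zero_iff.1 hne
  have ha := h.coeff_lt hPa
  have hb := h'.coeff_lt hPb
  have hsa : s ≤ a := by
    by_contra! hlt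
    have hdvd := (Nat.modEq_iff_dvd' hlt.le).1 (h.modEq hF hPa)
    have := Nat.eq_zero_of_dvd_of_lt hdvd (by omega)
    omega
  obtain ⟨t, ht⟩ := hab
  have ht2 : t = 2 := by
    rcases t with _ | _ | _ | t
    · omega
    · omega
    · rfl
    · have := Nat.mul_le_mul_left (q ^ 2 - 1) (show 3 ≤ t + 1 + 1 + 1 by omega)
      omega
  subst ht2
  by_cases hpa : p ∣ a
  · have hpq : p ∣ q ^ 2 := ((CharP.cast_eq_zero_iff F p q).1
      (cast_eq_zero_of_card_eq_sq hF)).trans (dvd_pow_self q two_ne_zero)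
    have hpb : ¬p ∣ b := fun hpb ↦ hp.one_lt.ne' <| Nat.dvd_one.1 <| (Nat.dvd_add_right hpq).1
      (by rw [show q ^ 2 + 1 = a + b by omega]; exact dvd_add hpa hpb)
    refine hPa ?_
    rw [show a = q ^ 2 + 1 - b by omega]
    exact h'.coeff_eq_zero_of_not_dvd hF (by omega) (by omega) (by omega) h hpb hPb
  · refine hPb ?_
    rw [show b = q ^ 2 + 1 - a by omega]
    exact h.coeff_eq_zero_of_not_dvd hF hs hsq hss' h' hpa hPa

theorem sum_pow_sub_self_sq_mul_pow (hq : 2 < q) :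
    ∑ x : F, (x ^ q - x) ^ 2 * x ^ (q ^ 2 - 3) = -1 := by
  have hqq : 3 * q ≤ q ^ 2 := by nlinarith
  have hnot (a : ℕ) (ha : 0 < a) (ha' : a < q ^ 2 - 1) :
      ¬(0 < q ^ 2 - 1 + a ∧ Fintype.card F - 1 ∣ q ^ 2 - 1 + a) := by
    rw [hF, not_and, Nat.dvd_add_right dvd_rfl]
    exact fun _ hdvd ↦ ha.ne' (Nat.eq_zero_of_dvd_of_lt hdvd ha')
  have hexpand (x : F) : (x ^ q - x) ^ 2 * x ^ (q ^ 2 - 3) =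
      x ^ (q ^ 2 - 1 + 2 * (q - 1)) - 2 * x ^ (q ^ 2 - 1 + (q - 1)) + x ^ (q ^ 2 - 1) := by
    rw [show q ^ 2 - 1 + 2 * (q - 1) = q * 2 + (q ^ 2 - 3) by omega,
      show q ^ 2 - 1 + (q - 1) = q + 1 + (q ^ 2 - 3) by omega,
      show q ^ 2 - 1 = 2 + (q ^ 2 - 3) by omega]
    ring
  simp_rw [hexpand, sum_add_distrib, sum_sub_distrib, ← mul_sum, sum_pow_eq_ite]
  rw [if_neg (hnot _ (by omega) (by omega)), if_neg (hnot _ (by omega) (by omega)), hF,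
    if_pos ⟨by omega, dvd_rfl⟩, mul_zero, sub_zero, zero_add]

theorem IsSparseForm.exists_eval_mul_eval_ne {s s' : ℕ} (hs : 3 ≤ s) (hsq : s ≤ q - 2)
    (hss' : s + s' = q + 1) {P P' : F[X]} (h : IsSparseForm q s P) (h' : IsSparseForm q s' P') :
    ∃ x, P.eval x * P'.eval x ≠ (x ^ q - x) ^ 2 := by
  by_contra! heq
  have hsum := sum_eval_mul_pow (P * P') (q ^ 2 - 3)
  simp only [eval_mul, heq, sum_pow_sub_self_sq_mul_pow hF (show 2 < q by omega), neg_inj] at hsum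
  refine one_ne_zero (hsum.trans (sum_eq_zero fun e he ↦ ?_))
  rw [coeff_mul]
  refine sum_eq_zero fun ab hab ↦ ?_
  refine h.coeff_mul_coeff_eq_zero hF hs hsq hss' h' ?_
  rw [mem_antidiagonal.1 hab]
  exact hF ▸ (mem_filter.1 he).2.2

variable [DecidableEq F]

theorem IsDualPair.exists_isSparseForm {f f' : F → F} {s : ℕ} (h : IsDualPair q f f') (hq : 2 < q)
    (hs : IsSubfieldHomogeneous q s f') :
    ∃ P : F[X], IsSparseForm q s P ∧ ∀ x, P.eval x = f' x := by
  obtain ⟨P, hdeg, hPf, hder⟩ := h.exists_polynomial hF hq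
  obtain rfl : P.eval = f' := funext hPf
  refine ⟨P, ⟨hdeg, h.right.pow_eq, ?_, hder, hs⟩, hPf⟩
  exact (h.right.eq_zero_iff 0).2 (zero_pow (by omega))

theorem IsDualPair.exists_eq_mul_pow_sub {f f' : F → F} {s s' : ℕ} (h : IsDualPair q f f')
    (h' : IsDualPair q f' f) (hq : 2 < q) (hmul : ∀ x, f x * f' x = (x ^ q - x) ^ 2)
    (hs : IsSubfieldHomogeneous q s f) (hs' : IsSubfieldHomogeneous q s' f')
    (hss' : s = 1 ∧ s' = 1 ∨ 3 ≤ s ∧ s ≤ q - 2 ∧ s + s' = q + 1) :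
    ∃ b ≠ 0, ∀ x, f x = b * (x ^ q - x) := by
  obtain ⟨P, hP, hPf⟩ := h'.exists_isSparseForm hF hq hs
  obtain ⟨P', hP', hPf'⟩ := h.exists_isSparseForm hF hq hs'
  simp only [← hPf, ← hPf'] at hmul ⊢
  rcases hss' with ⟨rfl, rfl⟩ | ⟨hs3, hsq, hsum⟩
  · exact hP.exists_eval_eq_mul_pow_sub hF hq hP' hmul
  · obtain ⟨x, hx⟩ := hP.exists_eval_mul_eval_ne hF hs3 hsq hsum hP'
    exact absurd (hmul x) hx

end SparseForms

section ProductsOfDifferences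

open Finset Polynomial Lagrange

theorem pow_card_eq_one_of_mul_mem {M : Type*} [CommGroupWithZero M] {T : Finset M}
    (h₀ : (0 : M) ∉ T) {a : M} (ha : a ≠ 0) (hT : ∀ x ∈ T, a * x ∈ T) : a ^ #T = 1 := by
  classical
  have hprod : ∏ x ∈ T, x = a ^ #T * ∏ x ∈ T, x := by
    have himage : T.image (a * ·) = T :=
      eq_of_subset_of_card_le (image_subset_iff.2 hT)
        (card_image_of_injective _ (mul_right_injective₀ ha)).ge
    conv_lhs => rw [← himage]
    rw [prod_image fun x _ y _ h ↦ mul_left_cancel₀ ha h, prod_mul_distrib, prod_const]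
  have hne : ∏ x ∈ T, x ≠ 0 := prod_ne_zero_iff.2 fun x hx h ↦ h₀ (h ▸ hx)
  exact (mul_eq_right₀ hne).1 hprod.symm

variable {F : Type*} [Field F] [Fintype F] [DecidableEq F] {q : ℕ} (hF : Fintype.card F = q ^ 2)
include hF

theorem sub_one_dvd_card_of_mul_mem {T : Finset F} (h₀ : (0 : F) ∉ T)
    (hT : ∀ l ∈ subfieldUnits q F, ∀ x ∈ T, l * x ∈ T) : q - 1 ∣ #T := by
  obtain ⟨w, hw⟩ := exists_isPrimitiveRoot_sub_one hF
  have hw₀ : w ≠ 0 := hw.ne_zero (Nat.sub_pos_of_lt (one_lt_of_card_eq_sq hF)).ne'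
  exact hw.dvd_of_pow_eq_one _
    (pow_card_eq_one_of_mul_mem h₀ hw₀ (hT w (by simpa [subfieldUnits] using hw.pow_eq_one)))

theorem prod_sub_univ_erase (a : F) : ∏ c ∈ univ.erase a, (a - c) = -1 := by
  have h := eval_nodal_derivative_eval_node_eq (v := (id : F → F)) (mem_univ a)
  rw [nodal_univ_of_card_eq_sq hF, eval_nodal] at h
  simpa [cast_eq_zero_of_card_eq_sq hF, derivative_X_pow] using h.symm

theorem prod_sub_filter_pow_eq (a : F) : ∏ c : F with c ^ q = c, (a - c) = a ^ q - a := by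
  have hnodal : nodal ({c | c ^ q = c} : Finset F) id = X ^ q - X := by
    have hq := one_lt_of_card_eq_sq hF
    refine nodal_id_eq_of_monic (monic_X_pow_sub (degree_X.le.trans_lt (by simpa using hq)))
      ?_ fun x hx ↦ ?_
    · rw [card_filter_pow_eq_self hF, natDegree_sub_eq_left_of_natDegree_lt] <;> simp [hq]
    · simpa [sub_eq_zero] using hx
  simpa [eval_nodal] using congrArg (eval a) hnodal

theorem pow_sub_mul_prod_sub_offSubfield_erase {a : F} (ha : a ^ q ≠ a) :
    (a ^ q - a) * ∏ c ∈ (offSubfield q F).erase a, (a - c) = -1 := by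
  rw [← prod_sub_univ_erase hF a, ← prod_sub_filter_pow_eq hF,
    ← prod_filter_mul_prod_filter_not (univ.erase a) (fun c ↦ c ^ q = c)]
  congr 2
  · ext c
    simp only [mem_filter, mem_univ, true_and, mem_erase, and_true]
    exact ⟨fun hc ↦ ⟨fun h ↦ ha (h ▸ hc), hc⟩, And.right⟩
  · ext c
    simp [and_comm]

end ProductsOfDifferences

section UnitalWeight

open Finset

variable {F : Type*} [Field F] {q : ℕ} {g : F → F}

/-- The weight `x ↦ (x ^ q - x) ^ 2 / g x`, which will form a dual pair with `g`. -/
def dualWeight (q : ℕ) (g : F → F) (x : F) : F :=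
  (x ^ q - x) ^ 2 / g x

section

variable [Fintype F] (hF : Fintype.card F = q ^ 2)
include hF

theorem IsSubfieldHomogeneous.dualWeight {s s' : ℕ} (hs : IsSubfieldHomogeneous q s g)
    (hss' : s + s' = 2 ∨ s + s' = q + 1) : IsSubfieldHomogeneous q s' (dualWeight q g) := by
  intro l hl x
  have hq := one_lt_of_card_eq_sq hF
  have hl₀ : l ≠ 0 := by
    rintro rfl
    exact zero_ne_one ((zero_pow (by omega)).symm.trans hl)
  have hlq : l ^ q = l := by
    rw [← mul_pow_sub_one (by omega) l, hl, mul_one]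
  have hpow : l ^ 2 = l ^ s' * l ^ s := by
    rw [← pow_add, add_comm]
    rcases hss' with h | h <;> rw [h]
    rw [sq, pow_succ, hlq]
  rw [_root_.dualWeight, _root_.dualWeight, hs l hl, mul_pow, hlq, ← mul_sub, mul_pow, hpow]
  field_simp

theorem IsSubfieldWeight.dualWeight (hg : IsSubfieldWeight q g) :
    IsSubfieldWeight q (dualWeight q g) where
  pow_eq x := by
    rw [_root_.dualWeight, div_pow, hg.pow_eq, pow_right_comm, sub_pow_of_card_eq_sq hF,
      pow_pow_of_card_eq_sq hF, sub_sq_comm]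
  eq_zero_iff x := by
    rw [_root_.dualWeight, div_eq_zero_iff, hg.eq_zero_iff, sq_eq_zero_iff, sub_eq_zero, or_self]

end

variable [Fintype F] [DecidableEq F]

/-- The intersection properties of the weight `g` attached to a unital with equation
`z ^ (q + 1) * g (x / z) = 1`, in affine coordinates whose axes are tangent lines: the fibres of `g`
come from the horizontal lines, and the norm fibres from the lines `x = m * z + b`, which meet the
line at infinity in a point of the unital if and only if `m` lies in the subfield. -/
structure IsUnitalWeight (q : ℕ) (g : F → F) : Prop extends IsSubfieldWeight q g where
  card_fibre : ∀ β ∈ subfieldUnits q F, #{c | g c = β} = q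
  card_normFibre : ∀ m, ∀ β ∈ subfieldUnits q F,
    #(normFibre q g m β) + (if m ^ q = m then 1 else 0) = 1 ∨
      #(normFibre q g m β) + (if m ^ q = m then 1 else 0) = q + 1
  homogeneous : ∀ l ∈ subfieldUnits q F, ∃ k, ∀ x, g (l * x) = k * g x

theorem card_filter_sub_pow_eq {c d : F} (hcd : c ≠ d) (κ : F) (n : ℕ) :
    #{a ∈ univ.erase c | (a - d) ^ n = κ * (c - a) ^ n} =
      #(({x | x ^ n = κ} : Finset F).erase (-1)) := by
  have hcd' : c - d ≠ 0 := sub_ne_zero.2 hcd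
  have hsub (x : F) (hx : 1 + x ≠ 0) :
      c - (c - d) / (1 + x) - d = x * ((c - d) / (1 + x)) := by field_simp; ring
  refine card_nbij' (fun a ↦ (a - d) / (c - a)) (fun x ↦ c - (c - d) / (1 + x)) ?_ ?_ ?_ ?_
  · intro a ha
    simp only [coe_filter, mem_erase, mem_univ, and_true, Set.mem_ofPred_eq] at ha
    have hca : c - a ≠ 0 := sub_ne_zero.2 (Ne.symm ha.1)
    simp only [coe_erase, coe_filter, mem_univ, true_and, Set.mem_sdiff, Set.mem_ofPred_eq,
      Set.mem_singleton_iff]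
    refine ⟨by rw [div_pow, ha.2, mul_div_cancel_right₀ _ (pow_ne_zero _ hca)], fun h ↦ ?_⟩
    rw [div_eq_iff hca] at h
    exact hcd' (by linear_combination h)
  · intro x hx
    simp only [coe_erase, coe_filter, mem_univ, true_and, Set.mem_sdiff, Set.mem_ofPred_eq,
      Set.mem_singleton_iff] at hx
    have hx₁ : 1 + x ≠ 0 := fun h ↦ hx.2 (eq_neg_of_add_eq_zero_right h)
    simp only [coe_filter, mem_erase, mem_univ, and_true, Set.mem_ofPred_eq]
    refine ⟨fun h ↦ div_ne_zero hcd' hx₁ (sub_eq_self.1 h), ?_⟩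
    rw [hsub x hx₁, sub_sub_cancel, mul_pow, hx.1]
  · intro a ha
    have hca : c - a ≠ 0 := sub_ne_zero.2 (Ne.symm (mem_erase.1 (mem_filter.1 ha).1).1)
    have h₁ : 1 + (a - d) / (c - a) = (c - d) / (c - a) := by field_simp; ring
    simp only [h₁]
    field_simp
    ring
  · intro x hx
    have hx₁ : 1 + x ≠ 0 := fun h ↦ by simp [eq_neg_of_add_eq_zero_right h] at hx
    simp only [hsub x hx₁, sub_sub_cancel]
    field_simp

variable (hF : Fintype.card F = q ^ 2)
include hF

theorem sum_card_normFibre (hg : IsSubfieldWeight q g) (m : F) :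
    ∑ β ∈ subfieldUnits q F, #(normFibre q g m β) = #((offSubfield q F).erase m) := by
  have h := prod_norm_div_eq_prod_pow_card_normFibre hF hg (fun _ ↦ Multiplicative.ofAdd 1) m
  simp only [prod_const, ← ofAdd_nsmul, smul_eq_mul, mul_one] at h
  exact (Multiplicative.ofAdd.injective h).symm

theorem card_filter_norm_sub_eq {c d κ : F} (hcd : c ≠ d) (hκ : κ ∈ subfieldUnits q F) :
    #{a ∈ univ.erase c | (a - d) ^ (q + 1) = κ * (c - a) ^ (q + 1)} + (if κ = 1 then 1 else 0) =
      q + 1 := by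
  have hneg : (-1 : F) ^ (q + 1) = 1 := by
    rw [pow_succ, neg_one_pow_of_card_eq_sq hF, neg_one_mul, neg_neg]
  rw [card_filter_sub_pow_eq hcd]
  refine Eq.trans ?_ (card_filter_pow_succ_eq hF hκ)
  split_ifs with h
  · rw [card_erase_add_one]
    simpa [h] using hneg
  · rw [erase_eq_of_notMem, add_zero]
    simpa [hneg] using Ne.symm h

theorem card_filter_norm_sub_div_eq (hg : IsSubfieldWeight q g) {γ : F}
    (hγ : γ ∈ subfieldUnits q F) (c d : F) :
    #{a ∈ univ.erase c | (a - d) ^ (q + 1) / g d = (c - a) ^ (q + 1) / γ} +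
        (if d ∈ ({d | g d = γ} : Finset F).erase c then 1 else 0) =
      (if d ∈ (offSubfield q F).erase c then q + 1 else 0) +
        if c = d then if g d = γ then q ^ 2 - 1 else 0 else 0 := by
  have hγ₀ := ((mem_subfieldUnits hF).1 hγ).2
  have hnorm : ∀ a ∈ univ.erase c, (c - a) ^ (q + 1) ≠ 0 := fun a ha ↦
    pow_ne_zero _ (sub_ne_zero.2 (ne_of_mem_erase ha).symm)
  by_cases hd : d ^ q = d
  · have hgd := (hg.eq_zero_iff d).2 hd
    have hempty : {a ∈ univ.erase c | (a - d) ^ (q + 1) / g d = (c - a) ^ (q + 1) / γ} = ∅ :=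
      filter_eq_empty_iff.2 fun a ha ↦ by
        rw [hgd, div_zero]
        exact (div_ne_zero (hnorm a ha) hγ₀).symm
    rw [hempty, card_empty]
    simp [hd, hgd, hγ₀.symm]
  have hgd : g d ≠ 0 := fun h ↦ hd ((hg.eq_zero_iff d).1 h)
  obtain rfl | hcd := eq_or_ne c d
  · have hiff : ∀ a ∈ univ.erase c,
        ((a - c) ^ (q + 1) / g c = (c - a) ^ (q + 1) / γ ↔ g c = γ) := fun a ha ↦ by
      rw [sub_pow_succ_comm_of_card_eq_sq hF a c, div_eq_div_iff hgd hγ₀,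
        mul_right_inj' (hnorm a ha), eq_comm]
    rw [filter_congr hiff, filter_const]
    split_ifs <;> simp_all
  · have hκ : g d / γ ∈ subfieldUnits q F := by
      rw [mem_subfieldUnits hF, div_pow, hg.pow_eq, ((mem_subfieldUnits hF).1 hγ).1]
      exact ⟨rfl, div_ne_zero hgd hγ₀⟩
    have hiff : ∀ a ∈ univ.erase c, ((a - d) ^ (q + 1) / g d = (c - a) ^ (q + 1) / γ ↔
        (a - d) ^ (q + 1) = g d / γ * (c - a) ^ (q + 1)) := fun a _ ↦ by
      rw [div_eq_iff hgd, div_mul_eq_mul_div, div_mul_eq_mul_div, mul_comm]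
    rw [filter_congr hiff, if_neg hcd, add_zero]
    have := card_filter_norm_sub_eq hF hcd hκ
    simpa [hcd.symm, hd, div_eq_one_iff_eq hγ₀] using this

theorem sum_card_normFibre_norm_sub_div (hg : IsSubfieldWeight q g) {γ : F}
    (hγ : γ ∈ subfieldUnits q F) (c : F) :
    ∑ a ∈ univ.erase c, #(normFibre q g a ((c - a) ^ (q + 1) / γ)) +
        #(({d | g d = γ} : Finset F).erase c) =
      #((offSubfield q F).erase c) * (q + 1) + if g c = γ then q ^ 2 - 1 else 0 := by
  have hswap : ∑ a ∈ univ.erase c, #(normFibre q g a ((c - a) ^ (q + 1) / γ)) =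
      ∑ d, #{a ∈ univ.erase c | (a - d) ^ (q + 1) / g d = (c - a) ^ (q + 1) / γ} :=
    sum_card_bipartiteAbove_eq_sum_card_bipartiteBelow _
  have hsum := sum_congr (rfl : univ = univ) fun d _ ↦ card_filter_norm_sub_div_eq hF hg hγ c d
  rw [sum_add_distrib, sum_add_distrib, ← hswap, sum_ite_eq, if_pos (mem_univ c), sum_ite_mem,
    sum_ite_mem, univ_inter, univ_inter, sum_const, sum_const, smul_eq_mul, smul_eq_mul,
    mul_one] at hsum
  exact hsum

namespace IsUnitalWeight

variable (hg : IsUnitalWeight q g)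
include hg

theorem card_normFibre_of_eq {m : F} (hm : m ^ q = m) :
    ∀ β ∈ subfieldUnits q F, #(normFibre q g m β) = q := by
  have hle : ∀ β ∈ subfieldUnits q F, #(normFibre q g m β) ≤ q := fun β hβ ↦ by
    have := hg.card_normFibre m β hβ
    rw [if_pos hm] at this
    omega
  refine (sum_eq_sum_iff_of_le hle).1 ?_
  rw [sum_card_normFibre hF hg.toIsSubfieldWeight, erase_eq_of_notMem (by simpa using hm),
    card_offSubfield hF, sum_const, card_subfieldUnits hF, smul_eq_mul, Nat.sub_mul, one_mul, sq]

theorem exists_card_normFibre_eq_ite {m : F} (hm : m ^ q ≠ m) :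
    ∃ b ∈ subfieldUnits q F, ∀ β ∈ subfieldUnits q F,
      #(normFibre q g m β) = if β = b then 1 else q + 1 := by
  have hq := one_lt_of_card_eq_sq hF
  have hcase : ∀ β ∈ subfieldUnits q F, #(normFibre q g m β) = 1 ∨ #(normFibre q g m β) = q + 1 :=
    fun β hβ ↦ by simpa [hm] using hg.card_normFibre m β hβ
  obtain ⟨b, hb⟩ : ∃ b, {β ∈ subfieldUnits q F | #(normFibre q g m β) = 1} = {b} := by
    rw [← card_eq_one]
    have hsum : ∑ β ∈ subfieldUnits q F,
        (#(normFibre q g m β) + if #(normFibre q g m β) = 1 then q else 0) =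
          (q - 1) * (q + 1) := by
      rw [← card_subfieldUnits hF, ← smul_eq_mul, ← sum_const]
      refine sum_congr rfl fun β hβ ↦ ?_
      have := hcase β hβ
      split_ifs <;> omega
    rw [sum_add_distrib, sum_card_normFibre hF hg.toIsSubfieldWeight,
      card_erase_of_mem (by simpa using hm), card_offSubfield hF, ← sum_filter, sum_const,
      smul_eq_mul, mul_comm (q - 1), ← Nat.sq_sub_sq, one_pow] at hsum
    have hqq : q * 2 ≤ q ^ 2 := by rw [sq]; gcongr; exact hq
    refine Nat.eq_of_mul_eq_mul_right (zero_lt_one.trans hq) ?_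
    omega
  have hmem : ∀ β, (β ∈ subfieldUnits q F ∧ #(normFibre q g m β) = 1) ↔ β = b := by
    simpa [Finset.ext_iff] using hb
  refine ⟨b, ((hmem b).2 rfl).1, fun β hβ ↦ ?_⟩
  split_ifs with h
  · exact ((hmem β).2 h).2
  · exact (hcase β hβ).resolve_left fun h' ↦ h ((hmem β).1 ⟨hβ, h'⟩)

theorem prod_offSubfield : ∏ c ∈ offSubfield q F, g c = -1 := by
  rw [← prod_fiberwise_of_maps_to' (t := subfieldUnits q F) (g := g) (f := fun x ↦ x)
    fun c hc ↦ hg.mem_subfieldUnits hF (mem_offSubfield.1 hc)]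
  have hfibre : ∀ β ∈ subfieldUnits q F, ∏ c ∈ offSubfield q F with g c = β, β = β ^ q := by
    intro β hβ
    rw [prod_const]
    refine congrArg (β ^ ·) ((congrArg card ?_).trans (hg.card_fibre β hβ))
    ext c
    simp only [mem_filter, mem_univ, true_and, mem_offSubfield, and_iff_right_iff_imp]
    exact fun h h' ↦ ((mem_subfieldUnits hF).1 hβ).2 (h ▸ (hg.eq_zero_iff c).2 h')
  rw [prod_congr rfl hfibre, prod_pow, prod_subfieldUnits hF, neg_one_pow_of_card_eq_sq hF]

theorem eq_dualWeight {m b : F} (hm : m ^ q ≠ m) (hb : b ∈ subfieldUnits q F)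
    (h : ∀ β ∈ subfieldUnits q F, #(normFibre q g m β) = if β = b then 1 else q + 1) :
    b = dualWeight q g m := by
  have hgm : g m ≠ 0 := fun h ↦ hm ((hg.eq_zero_iff m).1 h)
  have hprod : (∏ c ∈ (offSubfield q F).erase m, (m - c) ^ (q + 1) / g c) * b = 1 := by
    rw [prod_norm_div_eq_prod_pow_card_normFibre hF hg.toIsSubfieldWeight (fun x ↦ x)]
    have hsplit : ∀ β ∈ subfieldUnits q F,
        β ^ #(normFibre q g m β) * (if β = b then β ^ q else 1) = β ^ (q + 1) := by
      intro β hβ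
      rw [h β hβ]
      split_ifs
      · rw [pow_one, pow_succ']
      · rw [mul_one]
    have hall := prod_congr rfl hsplit
    rw [prod_mul_distrib, prod_ite_eq' _ b, if_pos hb, prod_pow, prod_subfieldUnits hF,
      ((mem_subfieldUnits hF).1 hb).1, pow_succ, neg_one_pow_of_card_eq_sq hF] at hall
    rw [hall, neg_one_mul, neg_neg]
  rw [prod_div_distrib, prod_pow] at hprod
  have hdiff := pow_sub_mul_prod_sub_offSubfield_erase hF hm
  have hweight := hg.prod_offSubfield hF
  rw [← mul_prod_erase _ _ (mem_offSubfield.2 hm)] at hweight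
  have hdiff' := congrArg (· ^ q) hdiff
  simp only [mul_pow, neg_one_pow_of_card_eq_sq hF, sub_pow_of_card_eq_sq hF,
    pow_pow_of_card_eq_sq hF] at hdiff'
  rw [eq_div_of_mul_eq hgm ((mul_comm _ _).trans hweight)] at hprod
  rw [_root_.dualWeight, eq_div_iff hgm]
  have hnorm := congrArg₂ (· * ·) hdiff hdiff'
  field_simp at hprod
  linear_combination -(b * g m) * hnorm + (m ^ q - m) ^ 2 * hprod

theorem isDualPair : IsDualPair q g (dualWeight q g) where
  left := hg.toIsSubfieldWeight
  right := hg.dualWeight hF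
  card_normFibre_of_eq m hm := hg.card_normFibre_of_eq hF hm
  card_normFibre_of_ne m hm := by
    obtain ⟨b, hb, h⟩ := hg.exists_card_normFibre_eq_ite hF hm
    rwa [← hg.eq_dualWeight hF hm hb h]

theorem sum_card_normFibre_add_mul_card_normFibre_dualWeight {γ : F} (hγ : γ ∈ subfieldUnits q F)
    (c : F) :
    ∑ a ∈ univ.erase c, #(normFibre q g a ((c - a) ^ (q + 1) / γ)) +
        #(normFibre q (dualWeight q g) c γ) * q + #(({a | a ^ q = a} : Finset F).erase c) =
      (q ^ 2 - 1) * (q + 1) := by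
  have hγ₀ := ((mem_subfieldUnits hF).1 hγ).2
  have hcount : ∀ a ∈ univ.erase c, #(normFibre q g a ((c - a) ^ (q + 1) / γ)) +
      (if a ∈ normFibre q (dualWeight q g) c γ then q else 0) + (if a ^ q = a then 1 else 0) =
        q + 1 := by
    intro a ha
    have hβ : (c - a) ^ (q + 1) / γ ∈ subfieldUnits q F := by
      have hca := pow_succ_mem_subfieldUnits hF (sub_ne_zero.2 (ne_of_mem_erase ha).symm)
      rw [mem_subfieldUnits hF] at hca hγ ⊢
      exact ⟨by rw [div_pow, hca.1, hγ.1], div_ne_zero hca.2 hγ.2⟩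
    by_cases haq : a ^ q = a
    · have hdual := ((hg.dualWeight hF).eq_zero_iff a).2 haq
      rw [hg.card_normFibre_of_eq hF haq _ hβ]
      simp [normFibre, hdual, hγ₀.symm, haq]
    · have hdual : dualWeight q g a ≠ 0 := fun h ↦ haq (((hg.dualWeight hF).eq_zero_iff a).1 h)
      have hmem : a ∈ normFibre q (dualWeight q g) c γ ↔
          (c - a) ^ (q + 1) / γ = dualWeight q g a := by
        rw [normFibre, mem_filter, and_iff_right (mem_univ a), div_eq_iff hdual, div_eq_iff hγ₀,
          mul_comm γ]
      simp only [(hg.isDualPair hF).card_normFibre_of_ne a haq _ hβ, hmem, if_neg haq]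
      split_ifs <;> omega
  have hsum := sum_congr rfl hcount
  have hc : c ∉ normFibre q (dualWeight q g) c γ := by simpa [normFibre] using hγ₀.symm
  rw [sum_add_distrib, sum_add_distrib, sum_ite_mem, ← sum_filter, erase_inter, univ_inter,
    erase_eq_of_notMem hc, sum_const, sum_const, sum_const, card_erase_of_mem (mem_univ c),
    card_univ, hF, filter_erase] at hsum
  simpa only [smul_eq_mul, mul_one] using hsum

theorem isDualPair_dualWeight : IsDualPair q (dualWeight q g) g := by
  have hq := one_lt_of_card_eq_sq hF
  have hq₁ : 1 ≤ q ^ 2 := Nat.one_le_pow _ _ (by omega)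
  have hqq : q + 1 ≤ q ^ 2 := by nlinarith
  have hcount (c γ : F) (hγ : γ ∈ subfieldUnits q F) := And.intro
    (sum_card_normFibre_norm_sub_div hF hg.toIsSubfieldWeight hγ c)
    (hg.sum_card_normFibre_add_mul_card_normFibre_dualWeight hF hγ c)
  simp only [card_erase_eq_ite, mem_filter_univ, mem_offSubfield] at hcount
  refine ⟨hg.dualWeight hF, hg.toIsSubfieldWeight, fun c hc γ hγ ↦ ?_, fun c hc γ hγ ↦ ?_⟩ <;>
    obtain ⟨hsum, hdual⟩ := hcount c γ hγ <;>
    rw [hg.card_fibre γ hγ, card_offSubfield hF] at hsum <;>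
    rw [card_filter_pow_eq_self hF] at hdual <;>
    refine Nat.eq_of_mul_eq_mul_right (zero_lt_one.trans hq) ?_
  · have hgc : g c ≠ γ := fun h ↦ ((mem_subfieldUnits hF).1 hγ).2 (h ▸ (hg.eq_zero_iff c).2 hc)
    rw [if_neg hgc, if_neg (not_not.2 hc), if_neg hgc] at hsum
    rw [if_pos hc] at hdual
    zify [hq.le, hq₁, hqq, Nat.le_of_succ_le hqq] at hsum hdual ⊢
    linear_combination hdual - hsum
  · rw [if_pos hc, Nat.sub_sub] at hsum
    rw [if_neg hc] at hdual
    split_ifs with h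
    · rw [if_pos h.symm, if_pos h.symm] at hsum
      zify [hq.le, hq₁, hqq, Nat.le_of_succ_le hqq] at hsum hdual ⊢
      linear_combination hdual - hsum
    · rw [if_neg (Ne.symm h), if_neg (Ne.symm h)] at hsum
      zify [hq.le, hq₁, hqq, Nat.le_of_succ_le hqq] at hsum hdual ⊢
      linear_combination hdual - hsum

theorem exists_lt_isSubfieldHomogeneous : ∃ s < q - 1, IsSubfieldHomogeneous q s g := by
  have hq := one_lt_of_card_eq_sq hF
  obtain ⟨w, hw⟩ := exists_isPrimitiveRoot_sub_one hF
  have : NeZero (q - 1) := ⟨by omega⟩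
  have hwmem : w ∈ subfieldUnits q F := by simpa [subfieldUnits] using hw.pow_eq_one
  obtain ⟨k, hk⟩ := hg.homogeneous w hwmem
  obtain ⟨x, hx⟩ : (offSubfield q F).Nonempty := by
    rw [← card_pos, card_offSubfield hF, sq, Nat.sub_pos_iff_lt]
    exact (lt_mul_iff_one_lt_left (by omega)).2 hq
  have hw₀ := ((mem_subfieldUnits hF).1 hwmem).2
  have hwx : (w * x) ^ q ≠ w * x := by
    rw [mul_pow, ((mem_subfieldUnits hF).1 hwmem).1]
    exact (mul_right_injective₀ hw₀).ne (mem_offSubfield.1 hx)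
  obtain ⟨s, hs, hws⟩ : ∃ s < q - 1, w ^ s = k := by
    refine hw.eq_pow_of_pow_eq_one ?_
    have hgx := hg.mem_subfieldUnits hF (mem_offSubfield.1 hx)
    have hgwx := hg.mem_subfieldUnits hF hwx
    simp only [subfieldUnits, mem_filter_univ] at hgx hgwx
    rwa [hk, mul_pow, hgx, mul_one] at hgwx
  refine ⟨s, hs, fun l hl x ↦ ?_⟩
  obtain ⟨i, -, rfl⟩ := hw.eq_pow_of_pow_eq_one hl
  rw [pow_right_comm, hws]
  clear hl
  induction i with
  | zero => simp
  | succ i ih => rw [pow_succ', mul_assoc, hk, ih, pow_succ', mul_assoc]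

theorem exists_isSubfieldHomogeneous (hq : 2 < q) :
    ∃ s, (s = 1 ∨ 3 ≤ s ∧ s ≤ q - 2) ∧ IsSubfieldHomogeneous q s g := by
  obtain ⟨s, hs, hhom⟩ := hg.exists_lt_isSubfieldHomogeneous hF
  refine ⟨s, ?_, hhom⟩
  have hone : (1 : F) ∈ subfieldUnits q F := by simp [mem_subfieldUnits hF]
  have hndvd {n : ℕ} (hn : n = q) (h : q - 1 ∣ n) : False := by
    have := Nat.le_of_dvd (by omega) (Nat.dvd_sub h (hn ▸ dvd_rfl : q - 1 ∣ q - 1))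
    omega
  have hzero : s ≠ 0 := by
    rintro rfl
    refine hndvd (hg.card_fibre 1 hone)
      (sub_one_dvd_card_of_mul_mem hF ?_ fun l hl x hx ↦ ?_)
    · simp [(hg.eq_zero_iff 0).2 (zero_pow (by omega))]
    · rw [mem_filter_univ] at hx ⊢
      rw [hhom l (by simpa [subfieldUnits] using hl), hx, pow_zero, mul_one]
  have htwo : s ≠ 2 := by
    rintro rfl
    have hcard := hg.card_normFibre_of_eq hF (zero_pow (by omega)) 1 hone
    refine hndvd hcard (sub_one_dvd_card_of_mul_mem hF ?_ fun l hl x hx ↦ ?_)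
    · simp [normFibre]
    · rw [normFibre, mem_filter_univ] at hx ⊢
      obtain ⟨hlq, hl₀⟩ := (mem_subfieldUnits hF).1 hl
      rw [hhom l (by simpa [subfieldUnits] using hl), ← hx, zero_sub, zero_sub, ← mul_neg, mul_pow,
        pow_succ, hlq, ← sq, mul_div_mul_left _ _ (pow_ne_zero _ hl₀)]
  omega

theorem exists_eq_mul_pow_sub (hq : 2 < q) : ∃ b ≠ 0, ∀ x, g x = b * (x ^ q - x) := by
  obtain ⟨s, hs, hhom⟩ := hg.exists_isSubfieldHomogeneous hF hq
  obtain ⟨s', hss'⟩ : ∃ s', s = 1 ∧ s' = 1 ∨ 3 ≤ s ∧ s ≤ q - 2 ∧ s + s' = q + 1 := by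
    rcases hs with hs | hs
    · exact ⟨1, .inl ⟨hs, rfl⟩⟩
    · exact ⟨q + 1 - s, .inr ⟨hs.1, hs.2, by omega⟩⟩
  refine (hg.isDualPair hF).exists_eq_mul_pow_sub hF (hg.isDualPair_dualWeight hF) hq (fun x ↦ ?_)
    hhom (hhom.dualWeight hF (by omega)) hss'
  rw [dualWeight, mul_div_cancel_of_imp']
  intro h
  rw [(hg.eq_zero_iff x).1 h, sub_self, sq, mul_zero]

end IsUnitalWeight

end UnitalWeight

section DiagonalStabilizer

theorem card_comap_diag_mul_card_map_div {M : Type*} [CommGroup M] (G : Subgroup (M × M)) :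
    Nat.card (G.comap ((MonoidHom.id M).prod (MonoidHom.id M))) *
      Nat.card (G.map (MonoidHom.fst M M / MonoidHom.snd M M)) = Nat.card G := by
  rw [← Subgroup.relIndex_ker, Subgroup.relIndex,
    ← Subgroup.card_mul_index ((MonoidHom.fst M M / MonoidHom.snd M M).ker.subgroupOf G)]
  congr 1
  refine Nat.card_congr ⟨fun b ↦ ⟨⟨(b, b), b.2⟩, ?_⟩, fun t ↦ ⟨t.1.1.1, ?_⟩, fun b ↦ rfl,
    fun t ↦ ?_⟩
  · simp [Subgroup.mem_subgroupOf]
  · obtain ⟨⟨⟨a, b⟩, hG⟩, h⟩ := t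
    obtain rfl : a = b := by simpa [Subgroup.mem_subgroupOf, div_eq_one] using h
    exact hG
  · obtain ⟨⟨⟨a, b⟩, hG⟩, h⟩ := t
    obtain rfl : a = b := by simpa [Subgroup.mem_subgroupOf, div_eq_one] using h
    rfl

variable {F : Type*} [Field F]

/-- The group of diagonal maps `(x, z) ↦ (t₁ * x, t₂ * z)` that preserve the affine point set `S`
and the set `S₀` of points `(x : 1)` at infinity. -/
def diagonalStabilizer (S : Set (F × F)) (S₀ : Set F) : Subgroup (Fˣ × Fˣ) where
  carrier := {t | (∀ x z : F, (t.1 * x, t.2 * z) ∈ S ↔ (x, z) ∈ S) ∧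
    ∀ x : F, (t.1 / t.2 : Fˣ) * x ∈ S₀ ↔ x ∈ S₀}
  one_mem' := by simp
  mul_mem' := by
    rintro ⟨s₁, s₂⟩ ⟨t₁, t₂⟩ ⟨hs, hs₀⟩ ⟨ht, ht₀⟩
    refine ⟨fun x z ↦ ?_, fun x ↦ ?_⟩
    · simpa [mul_assoc, ht] using hs (t₁ * x) (t₂ * z)
    · rw [Prod.mk_mul_mk, mul_div_mul_comm, Units.val_mul, mul_assoc, hs₀, ht₀]
  inv_mem' := by
    rintro ⟨t₁, t₂⟩ ⟨ht, ht₀⟩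
    refine ⟨fun x z ↦ ?_, fun x ↦ ?_⟩
    · simpa using (ht (t₁⁻¹ * x) (t₂⁻¹ * z)).symm
    · have h := (ht₀ (((t₁⁻¹ / t₂⁻¹ : Fˣ) : F) * x)).symm
      rwa [← mul_assoc, ← Units.val_mul, div_mul_div_comm, mul_inv_cancel, mul_inv_cancel, div_one,
        Units.val_one, one_mul] at h

/-- The group of scalars `b` such that `(x, z) ↦ (b * x, b * z)` preserves `S` and `S₀`. -/
def scalarStabilizer (S : Set (F × F)) (S₀ : Set F) : Subgroup Fˣ :=
  (diagonalStabilizer S S₀).comap ((MonoidHom.id Fˣ).prod (MonoidHom.id Fˣ))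

variable {q : ℕ} {S : Set (F × F)} {S₀ : Set F}

theorem diagonalStabilizer_preimage_mul {e : F} (he : e ≠ 0) :
    diagonalStabilizer {p | (e * p.1, p.2) ∈ S} {x | e * x ∈ S₀} = diagonalStabilizer S S₀ := by
  ext t
  simp only [diagonalStabilizer, Subgroup.mem_mk, Submonoid.mem_mk, Subsemigroup.mem_mk,
    Set.mem_ofPred_eq, mul_left_comm e]
  refine and_congr ⟨fun h x z ↦ ?_, fun h x z ↦ h _ z⟩ ⟨fun h x ↦ ?_, fun h x ↦ h _⟩
  · simpa [mul_div_cancel₀ _ he] using h (x / e) z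
  · simpa [mul_div_cancel₀ _ he] using h (x / e)

/-- The intersection properties of a unital of order `q` in affine coordinates `(x, z)` for which
the tangent lines at `(1 : 0 : 0)` and `(0 : 0 : 1)` are `z = 0` and `x = 0`, homogeneous
coordinates being written `(x : y : z)`: the set `S` of its points `(x : 1 : z)` and the set `S₀` of
those `x` for which it contains `(x : 0 : 1)`. -/
structure IsAffineUnital (q : ℕ) (S : Set (F × F)) (S₀ : Set F) : Prop where
  zero_mem : 0 ∈ S₀
  ncard_infinity : S₀.ncard = q
  notMem : ∀ x, (x, 0) ∉ S
  ncard_row : ∀ z ≠ 0, {x | (x, z) ∈ S}.ncard = q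
  ncard_line : ∀ m b, {z | (m * z + b, z) ∈ S}.ncard + S₀.indicator 1 m = 1 ∨
    {z | (m * z + b, z) ∈ S}.ncard + S₀.indicator 1 m = q + 1

namespace IsAffineUnital

variable (h : IsAffineUnital q S S₀)
include h

theorem preimage_mul {e : F} (he : e ≠ 0) :
    IsAffineUnital q {p | (e * p.1, p.2) ∈ S} {x | e * x ∈ S₀} where
  zero_mem := by simpa using h.zero_mem
  ncard_infinity := by
    rw [← h.ncard_infinity]
    exact Set.ncard_preimage_of_injective_subset_range (mul_right_injective₀ he)
      fun x _ ↦ ⟨x / e, mul_div_cancel₀ x he⟩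
  notMem x := h.notMem _
  ncard_row z hz := by
    rw [← h.ncard_row z hz]
    exact Set.ncard_preimage_of_injective_subset_range (s := {x | (x, z) ∈ S})
      (mul_right_injective₀ he) fun x _ ↦ ⟨x / e, mul_div_cancel₀ x he⟩
  ncard_line m b := by
    have := h.ncard_line (e * m) (e * b)
    simp only [mul_assoc, ← mul_add] at this
    exact this

theorem ne_zero_of_mem {x z : F} (hxz : (x, z) ∈ S) : z ≠ 0 := by
  rintro rfl
  exact h.notMem x hxz

section

variable [Finite F]

theorem pow_sub_one_eq_one {t : Fˣ × Fˣ} (ht : t ∈ diagonalStabilizer S S₀) :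
    (t.1 / t.2) ^ (q - 1) = 1 := by
  have hS₀ : (S₀ \ {0}).ncard = q - 1 := by
    rw [Set.ncard_sdiff_singleton_of_mem h.zero_mem, h.ncard_infinity]
  have := pow_card_eq_one_of_mul_mem (T := (S₀ \ {0}).toFinite.toFinset) (by simp)
    (t.1 / t.2).ne_zero fun x hx ↦ by simpa [-Units.val_div_eq_div_val, ht.2 x] using hx
  rw [← Set.ncard_eq_toFinset_card _, hS₀] at this
  exact Units.ext (by simpa using this)

theorem map_div_le_rootsOfUnity :
    (diagonalStabilizer S S₀).map (MonoidHom.fst Fˣ Fˣ / MonoidHom.snd Fˣ Fˣ) ≤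
      rootsOfUnity (q - 1) F :=
  Subgroup.map_le_iff_le_comap.2 fun _ ht ↦ h.pow_sub_one_eq_one ht

variable (hq : 1 < q) (hcard : q ^ 2 - 1 ≤ Nat.card (diagonalStabilizer S S₀))
include hq hcard

theorem add_one_le_card_scalarStabilizer : q + 1 ≤ Nat.card (scalarStabilizer S S₀) := by
  have : NeZero (q - 1) := ⟨by omega⟩
  have hle := (Subgroup.card_le_of_le h.map_div_le_rootsOfUnity).trans
    (card_rootsOfUnity F (q - 1))
  rw [← card_comap_diag_mul_card_map_div, ← one_pow 2, Nat.sq_sub_sq] at hcard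
  exact Nat.le_of_mul_le_mul_right (hcard.trans (Nat.mul_le_mul_left _ hle)) (by omega)

theorem ncard_ray_and_notMem {c z : F} (hz : (c * z, z) ∈ S) :
    {z' | (c * z', z') ∈ S}.ncard = q + 1 ∧ c ∉ S₀ := by
  have hinj : Function.Injective fun b : Fˣ ↦ (b : F) * z :=
    (mul_left_injective₀ (h.ne_zero_of_mem hz)).comp Units.val_injective
  have hsub : (fun b : Fˣ ↦ (b : F) * z) '' (scalarStabilizer S S₀) ⊆ {z' | (c * z', z') ∈ S} := by
    rintro _ ⟨b, hb, rfl⟩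
    simpa [mul_left_comm c] using (hb.1 (c * z) z).2 hz
  have hle : q + 1 ≤ {z' | (c * z', z') ∈ S}.ncard :=
    calc q + 1 ≤ Nat.card (scalarStabilizer S S₀) := h.add_one_le_card_scalarStabilizer hq hcard
      _ = _ := (Set.ncard_image_of_injective _ hinj).symm
      _ ≤ _ := Set.ncard_le_ncard hsub
  have hline := h.ncard_line c 0
  simp only [add_zero] at hline
  by_cases hc : c ∈ S₀
  · rw [Set.indicator_of_mem hc, Pi.one_apply] at hline
    omega
  · rw [Set.indicator_of_notMem hc] at hline
    exact ⟨by omega, hc⟩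

theorem scalarStabilizer_eq_rootsOfUnity : scalarStabilizer S S₀ = rootsOfUnity (q + 1) F := by
  obtain ⟨x, hx⟩ : {x | (x, 1) ∈ S}.Nonempty :=
    Set.nonempty_of_ncard_ne_zero (by rw [h.ncard_row 1 one_ne_zero]; omega)
  have hray := (h.ncard_ray_and_notMem hq hcard (c := x) (z := 1) (by simpa using hx)).1
  rw [Set.ncard_eq_toFinset_card _] at hray
  refine Subgroup.eq_of_le_of_card_ge (fun b hb ↦ ?_)
    ((card_rootsOfUnity F (q + 1)).trans (h.add_one_le_card_scalarStabilizer hq hcard))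
  refine (mem_rootsOfUnity' _ _).2 (hray ▸ pow_card_eq_one_of_mul_mem (by simp [h.notMem])
    b.ne_zero fun z hz ↦ ?_)
  simp only [Set.Finite.mem_toFinset, Set.mem_ofPred_eq] at hz ⊢
  simpa [mul_left_comm x] using (hb.1 (x * z) z).2 hz

theorem map_div_eq_rootsOfUnity :
    (diagonalStabilizer S S₀).map (MonoidHom.fst Fˣ Fˣ / MonoidHom.snd Fˣ Fˣ) =
      rootsOfUnity (q - 1) F := by
  have : NeZero (q - 1) := ⟨by omega⟩
  refine Subgroup.eq_of_le_of_card_ge h.map_div_le_rootsOfUnity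
    ((card_rootsOfUnity F (q - 1)).trans (Nat.le_of_mul_le_mul_left ?_ q.succ_pos))
  have hle := card_rootsOfUnity F (q + 1)
  rw [← h.scalarStabilizer_eq_rootsOfUnity hq hcard] at hle
  rw [← card_comap_diag_mul_card_map_div, ← one_pow 2, Nat.sq_sub_sq] at hcard
  exact hcard.trans (Nat.mul_le_mul_right _ hle)

end

section

variable [Fintype F] (hF : Fintype.card F = q ^ 2)
  (hcard : q ^ 2 - 1 ≤ Nat.card (diagonalStabilizer S S₀))
include hF hcard

theorem mem_iff_pow_eq {c z z' : F} (hz : (c * z, z) ∈ S) :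
    (c * z', z') ∈ S ↔ z' ^ (q + 1) = z ^ (q + 1) := by
  classical
  have hq := one_lt_of_card_eq_sq hF
  have hz₀ := h.ne_zero_of_mem hz
  have hsub : {z' | z' ^ (q + 1) = z ^ (q + 1)} ⊆ {z' | (c * z', z') ∈ S} := by
    intro z' hz'
    have hb : (z' / z) ^ (q + 1) = 1 := by
      rw [div_pow, hz', div_self (pow_ne_zero _ hz₀)]
    obtain ⟨b, hbz⟩ : IsUnit (z' / z) := .of_pow_eq_one hb q.succ_ne_zero
    have hmem : b ∈ scalarStabilizer S S₀ := by
      rw [h.scalarStabilizer_eq_rootsOfUnity hq hcard, mem_rootsOfUnity', hbz, hb]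
    have hbmem := (hmem.1 (c * z) z).2 hz
    rw [mul_left_comm] at hbmem
    simpa [hbz, div_mul_cancel₀ _ hz₀] using hbmem
  refine Set.ext_iff.1 (Set.eq_of_subset_of_ncard_le hsub ?_).symm z'
  have hfibre := card_filter_pow_succ_eq hF (pow_succ_mem_subfieldUnits hF hz₀)
  rw [← Set.ncard_coe_finset, Finset.coe_filter_univ] at hfibre
  exact ((h.ncard_ray_and_notMem hq hcard hz).1.trans hfibre.symm).le

theorem exists_mem_div_eq {l : F} (hl : l ^ q = l) (hl₀ : l ≠ 0) :
    ∃ t ∈ diagonalStabilizer S S₀, (t.1 / t.2 : F) = l := by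
  have hq := one_lt_of_card_eq_sq hF
  have hl₁ : l ^ (q - 1) = 1 :=
    mul_right_cancel₀ hl₀ (by rw [← pow_succ, Nat.sub_add_cancel hq.le, hl, one_mul])
  lift l to Fˣ using hl₀.isUnit
  have hu : l ∈ rootsOfUnity (q - 1) F := (mem_rootsOfUnity' _ _).2 hl₁
  rw [← h.map_div_eq_rootsOfUnity hq hcard] at hu
  obtain ⟨t, ht, rfl⟩ := hu
  exact ⟨t, ht, by simp⟩

theorem exists_mul_mem_iff : ∃ e ≠ 0, ∀ x, e * x ∈ S₀ ↔ x ^ q = x := by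
  classical
  have hq := one_lt_of_card_eq_sq hF
  obtain ⟨e, he, he₀⟩ : ∃ e ∈ S₀, e ≠ 0 :=
    Set.exists_ne_of_one_lt_ncard (by rwa [h.ncard_infinity]) 0
  have hsub : (e * ·) '' {x | x ^ q = x} ⊆ S₀ := by
    rintro _ ⟨x, hx, rfl⟩
    obtain rfl | hx₀ := eq_or_ne x 0
    · simpa using h.zero_mem
    obtain ⟨t, ht, rfl⟩ := h.exists_mem_div_eq hF hcard hx hx₀
    simpa [mul_comm e] using (ht.2 e).2 he
  refine ⟨e, he₀, fun x ↦ ?_⟩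
  have heq := Set.eq_of_subset_of_ncard_le hsub <| by
    rw [h.ncard_infinity, Set.ncard_image_of_injective _ (mul_right_injective₀ he₀),
      ← Finset.coe_filter_univ, Set.ncard_coe_finset, card_filter_pow_eq_self hF]
  rw [← heq, (mul_right_injective₀ he₀).mem_set_image, Set.mem_ofPred_eq]

theorem exists_ray_mem_iff (c : F) : (∃ z, (c * z, z) ∈ S) ↔ c ∉ S₀ := by
  refine ⟨fun ⟨z, hz⟩ ↦ (h.ncard_ray_and_notMem (one_lt_of_card_eq_sq hF) hcard hz).2, fun hc ↦ ?_⟩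
  have hline := h.ncard_line c 0
  simp only [add_zero, Set.indicator_of_notMem hc] at hline
  exact Set.nonempty_of_ncard_ne_zero (s := {z | (c * z, z) ∈ S}) (by omega)

theorem exists_isSubfieldWeight (hS₀ : ∀ x, x ∈ S₀ ↔ x ^ q = x) :
    ∃ g, IsSubfieldWeight q g ∧ ∀ c z, (c * z, z) ∈ S ↔ z ^ (q + 1) * g c = 1 := by
  have hg (c : F) : ∃ b, b ^ q = b ∧ (b = 0 ↔ c ^ q = c) ∧
      ∀ z, (c * z, z) ∈ S ↔ z ^ (q + 1) * b = 1 := by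
    by_cases hc : c ∈ S₀
    · have hray := mt (h.exists_ray_mem_iff hF hcard c).1 (not_not.2 hc)
      refine ⟨0, zero_pow (by have := one_lt_of_card_eq_sq hF; omega),
        iff_of_true rfl ((hS₀ c).1 hc), fun z ↦ ?_⟩
      simpa using not_exists.1 hray z
    · obtain ⟨z, hz⟩ := (h.exists_ray_mem_iff hF hcard c).2 hc
      classical
      obtain ⟨hpow, hne⟩ :=
        (mem_subfieldUnits hF).1 (pow_succ_mem_subfieldUnits hF (h.ne_zero_of_mem hz))
      refine ⟨(z ^ (q + 1))⁻¹, by rw [inv_pow, hpow],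
        iff_of_false (inv_ne_zero hne) (mt (hS₀ c).2 hc), fun z' ↦ ?_⟩
      rw [h.mem_iff_pow_eq hF hcard hz, mul_inv_eq_one₀ hne]
  choose g hpow hzero hmem using hg
  exact ⟨g, ⟨hpow, hzero⟩, hmem⟩

end

end IsAffineUnital

section Weight

open Finset

variable [Fintype F] (hF : Fintype.card F = q ^ 2)
include hF

theorem exists_pow_succ_eq_of_mem_subfieldUnits [DecidableEq F] {β : F}
    (hβ : β ∈ subfieldUnits q F) : ∃ x ≠ 0, x ^ (q + 1) = β := by
  obtain ⟨x, hx⟩ := card_pos.1 (q.succ_pos.trans_eq (card_filter_pow_succ_eq hF hβ).symm)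
  rw [mem_filter_univ] at hx
  refine ⟨x, ?_, hx⟩
  rintro rfl
  exact ((mem_subfieldUnits hF).1 hβ).2 (by simpa using hx.symm)

theorem IsSubfieldWeight.apply_mul_eq_mul {g : F → F} (hgw : IsSubfieldWeight q g)
    (hg : ∀ c z, (c * z, z) ∈ S ↔ z ^ (q + 1) * g c = 1) {t : Fˣ × Fˣ}
    (ht : t ∈ diagonalStabilizer S S₀) (hl : (t.1 / t.2 : F) ^ q = t.1 / t.2) (x : F) :
    g (t.1 / t.2 * x) = (t.2 ^ (q + 1) : F)⁻¹ * g x := by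
  classical
  have hw : (t.2 ^ (q + 1) : F) ≠ 0 := pow_ne_zero _ t.2.ne_zero
  rw [eq_inv_mul_iff_mul_eq₀ hw]
  obtain hx | hx := eq_or_ne (g x) 0
  · rw [hx, (hgw.eq_zero_iff _).2 (by rw [mul_pow, hl, (hgw.eq_zero_iff x).1 hx]), mul_zero]
  obtain ⟨z, -, hz⟩ := exists_pow_succ_eq_of_mem_subfieldUnits hF (β := (g x)⁻¹)
    ((_root_.mem_subfieldUnits hF).2 ⟨by rw [inv_pow, hgw.pow_eq], inv_ne_zero hx⟩)
  have hmem := (hg x z).2 (by rw [hz, inv_mul_cancel₀ hx])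
  have := (hg (t.1 / t.2 * x) (t.2 * z)).1 (by
    convert (ht.1 (x * z) z).2 hmem using 2
    field_simp)
  rwa [mul_pow, hz, mul_right_comm, mul_inv_eq_one₀ hx] at this

namespace IsAffineUnital

variable [DecidableEq F] {g : F → F} (h : IsAffineUnital q S S₀)
  (hg : ∀ c z, (c * z, z) ∈ S ↔ z ^ (q + 1) * g c = 1)
include h hg

theorem card_fibre {β : F} (hβ : β ∈ subfieldUnits q F) : #{c | g c = β} = q := by
  obtain ⟨z, hz₀, rfl⟩ := exists_pow_succ_eq_of_mem_subfieldUnits hF hβ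
  have hpre : {c | g c = z ^ (q + 1)} = (· * z⁻¹) ⁻¹' {x | (x, z⁻¹) ∈ S} := by
    ext c
    rw [Set.mem_preimage, Set.mem_ofPred_eq, Set.mem_ofPred_eq, hg, inv_pow,
      inv_mul_eq_one₀ (pow_ne_zero _ hz₀), eq_comm]
  rw [← Set.ncard_coe_finset, coe_filter_univ, hpre]
  exact (Set.ncard_preimage_of_injective_subset_range (mul_left_injective₀ (inv_ne_zero hz₀))
    fun x _ ↦ ⟨x * z, mul_inv_cancel_right₀ hz₀ x⟩).trans (h.ncard_row _ (inv_ne_zero hz₀))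

theorem card_normFibre_eq_ncard (m : F) {b : F} (hb : b ≠ 0) :
    #(normFibre q g m (b ^ (q + 1))) = {z | (m * z + b, z) ∈ S}.ncard := by
  classical
  have hmem {c z : F} (hz₀ : z ≠ 0) (hcm : c ≠ m) (hz : z * (c - m) = b) :
      c ∈ normFibre q g m (b ^ (q + 1)) ↔ (m * z + b, z) ∈ S := by
    have hu := pow_ne_zero (q + 1) (sub_ne_zero.2 hcm)
    have hw := pow_ne_zero (q + 1) hz₀
    rw [show m * z + b = c * z by rw [← hz]; ring, hg, normFibre, mem_filter_univ,
      sub_pow_succ_comm_of_card_eq_sq hF, ← hz, mul_pow]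
    obtain hc | hc := eq_or_ne (g c) 0
    · simp [hc, hu, hw]
    · rw [div_eq_iff hc, mul_right_comm, eq_comm, mul_eq_right₀ hu]
  rw [Set.ncard_eq_toFinset_card']
  refine card_nbij' (fun c ↦ b / (c - m)) (fun z ↦ m + b / z) ?_ ?_ ?_ ?_
  · intro c hc
    have hcm : c ≠ m := by
      rintro rfl
      have hb₁ : 0 = b ^ (q + 1) := by simpa [normFibre] using hc
      exact pow_ne_zero _ hb hb₁.symm
    have hcm' := sub_ne_zero.2 hcm
    simpa using (hmem (div_ne_zero hb hcm') hcm (div_mul_cancel₀ _ hcm')).1 hc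
  · intro z hz
    simp only [Set.coe_toFinset, Set.mem_ofPred_eq] at hz
    have hz₀ := h.ne_zero_of_mem hz
    exact (hmem hz₀ (by simp [hb, hz₀]) (by simp [mul_div_cancel₀ _ hz₀])).2 hz
  · intro c _
    simp [div_div_cancel₀ hb]
  · intro z _
    simp [div_div_cancel₀ hb]

theorem isUnitalWeight (hcard : q ^ 2 - 1 ≤ Nat.card (diagonalStabilizer S S₀))
    (hS₀ : ∀ x, x ∈ S₀ ↔ x ^ q = x) (hgw : IsSubfieldWeight q g) : IsUnitalWeight q g where
  toIsSubfieldWeight := hgw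
  card_fibre _ hβ := h.card_fibre hF hg hβ
  card_normFibre m β hβ := by
    obtain ⟨b, hb, rfl⟩ := exists_pow_succ_eq_of_mem_subfieldUnits hF hβ
    have hind : (if m ^ q = m then 1 else 0) = S₀.indicator (1 : F → ℕ) m := by
      classical simp [Set.indicator_apply, hS₀]
    rw [hind, h.card_normFibre_eq_ncard hF hg m hb]
    exact h.ncard_line m b
  homogeneous l hl := by
    obtain ⟨hl, hl₀⟩ := (mem_subfieldUnits hF).1 hl
    obtain ⟨t, ht, rfl⟩ := h.exists_mem_div_eq hF hcard hl hl₀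
    exact ⟨_, hgw.apply_mul_eq_mul hF hg ht hl⟩

end IsAffineUnital

theorem IsAffineUnital.exists_mem_iff (h : IsAffineUnital q S S₀) (hq : 2 < q)
    (hcard : q ^ 2 - 1 ≤ Nat.card (diagonalStabilizer S S₀)) :
    ∃ e ≠ 0, ∃ a, a ^ q ≠ a ∧ (∀ x, e * x ∈ S₀ ↔ x ^ q = x) ∧
      ∀ x z, (e * x, z) ∈ S ↔ x ^ q * z - x * z ^ q = a - a ^ q := by
  classical
  obtain ⟨e, he, hS₀⟩ := h.exists_mul_mem_iff hF hcard
  have h' := h.preimage_mul he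
  rw [← diagonalStabilizer_preimage_mul he] at hcard
  obtain ⟨g, hgw, hg⟩ := h'.exists_isSubfieldWeight hF hcard hS₀
  have hgu := h'.isUnitalWeight hF hg hcard hS₀ hgw
  obtain ⟨b, hb, hgb⟩ := hgu.exists_eq_mul_pow_sub hF hq
  have hneg : (-1 : F) ∈ subfieldUnits q F :=
    (mem_subfieldUnits hF).2 ⟨neg_one_pow_of_card_eq_sq hF, neg_ne_zero.2 one_ne_zero⟩
  obtain ⟨a, ha⟩ := card_pos.1 ((hgu.card_fibre (-1) hneg).symm ▸ zero_lt_two.trans hq)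
  rw [mem_filter_univ, hgb] at ha
  have ha' : b * (a - a ^ q) = 1 := by linear_combination -ha
  refine ⟨e, he, a, fun haq ↦ by simp [haq] at ha, hS₀, fun x z ↦ ?_⟩
  obtain rfl | hz := eq_or_ne z 0
  · rw [mul_zero, zero_pow (zero_lt_two.trans hq).ne', mul_zero, sub_zero]
    exact iff_of_false (h.notMem _) (right_ne_zero_of_mul_eq_one ha').symm
  have hxz : z ^ (q + 1) * (b * ((x / z) ^ q - x / z)) = b * (x ^ q * z - x * z ^ q) := by
    rw [div_pow, pow_succ]
    field_simp
  have hmem := hg (x / z) z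
  rwa [div_mul_cancel₀ _ hz, hgb, hxz, ← ha', mul_right_inj' hb] at hmem

end Weight

end DiagonalStabilizer

section TangentLines

open Configuration Finset

theorem sum_ncard_mem_sub_one {P L : Type*} [Membership P L] [HasLines P L] [Finite P]
    [Fintype L] {U : Set P} {p : P} [DecidablePred (p ∈ · : L → Prop)]
    (hp : p ∈ U) : ∑ l : L with p ∈ l, ({x ∈ U | x ∈ l}.ncard - 1) = U.ncard - 1 := by
  classical
  have := Fintype.ofFinite P
  have hbelow : ∀ l : L, p ∈ l →
      #{x ∈ U.toFinset.erase p | x ∈ l} = {x ∈ U | x ∈ l}.ncard - 1 := by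
    intro l hl
    rw [filter_erase, card_erase_of_mem (by simpa using ⟨hp, hl⟩), Set.ncard_eq_toFinset_card']
    congr 2
    ext x
    simp
  have habove : ∀ x ∈ U.toFinset.erase p, #{l ∈ ({l | p ∈ l} : Finset L) | x ∈ l} = 1 := by
    intro x hx
    obtain ⟨l, hl, huniq⟩ := HasLines.existsUnique_line P L p x (ne_of_mem_erase hx).symm
    exact card_eq_one.2 ⟨l, by ext m; simpa using ⟨huniq m, by rintro rfl; exact hl⟩⟩
  calc ∑ l : L with p ∈ l, ({x ∈ U | x ∈ l}.ncard - 1)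
      = ∑ l : L with p ∈ l, #{x ∈ U.toFinset.erase p | x ∈ l} :=
        sum_congr rfl fun l hl ↦ (hbelow l ((mem_filter_univ l).1 hl)).symm
    _ = ∑ x ∈ U.toFinset.erase p, #{l ∈ ({l | p ∈ l} : Finset L) | x ∈ l} :=
        (sum_card_bipartiteAbove_eq_sum_card_bipartiteBelow (· ∈ ·)).symm
    _ = U.ncard - 1 := by
        rw [sum_congr rfl habove, sum_const, smul_eq_mul, mul_one,
          card_erase_of_mem (by simpa using hp), ← Set.ncard_eq_toFinset_card']

theorem existsUnique_mem_and_ncard_eq_one {P L : Type*} [Membership P L] [HasLines P L] [Finite P]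
    [Finite L] {n q : ℕ} (hq : q ≠ 0) {U : Set P} (hU : U.ncard = n * q + 1)
    (hline : ∀ l : L, {x ∈ U | x ∈ l}.ncard = 1 ∨ {x ∈ U | x ∈ l}.ncard = q + 1)
    {p : P} (hp : p ∈ U) (hn : lineCount L p = n + 1) :
    ∃! l : L, p ∈ l ∧ {x ∈ U | x ∈ l}.ncard = 1 := by
  classical
  have := Fintype.ofFinite L
  have hlines : #{l : L | p ∈ l} = n + 1 := by
    rw [← hn, lineCount, Nat.card_eq_fintype_card, Fintype.card_subtype]
  have hcount : ∀ l : L, {x ∈ U | x ∈ l}.ncard - 1 =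
      if {x ∈ U | x ∈ l}.ncard = 1 then 0 else q := by
    intro l
    rcases hline l with h | h <;> simp [h, hq]
  have hsecants : #{l : L | p ∈ l ∧ {x ∈ U | x ∈ l}.ncard ≠ 1} = n := by
    have hsum := sum_ncard_mem_sub_one (L := L) hp
    rw [sum_congr rfl fun l _ ↦ hcount l, sum_ite, sum_const_zero, zero_add, sum_const,
      smul_eq_mul, hU, Nat.add_sub_cancel, filter_filter] at hsum
    exact Nat.eq_of_mul_eq_mul_right (Nat.pos_of_ne_zero hq) hsum
  have htangents := card_filter_add_card_filter_not (s := ({l | p ∈ l} : Finset L))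
    (fun l ↦ {x ∈ U | x ∈ l}.ncard = 1)
  rw [hlines, filter_filter, filter_filter, hsecants, add_comm, add_right_inj] at htangents
  obtain ⟨l, hl⟩ := card_eq_one.1 htangents
  exact ⟨l, (mem_filter_univ l).1 (hl ▸ mem_singleton_self l),
    fun m hm ↦ mem_singleton.1 (hl ▸ (mem_filter_univ m).2 hm)⟩

end TangentLines

section ProjectivePlane

open Configuration Matrix

theorem lineCount_projectivization [Finite K] (p : PGPt K) :
    lineCount (PGPt K) p = Nat.card K + 1 := by
  classical
  have := Fintype.ofFinite (PGPt K)
  have horder := ProjectivePlane.card_points (PGPt K) (PGPt K)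
  rw [← Nat.card_eq_fintype_card, card_of_finrank K (Fin 3 → K) (Module.finrank_fin_fun K)]
    at horder
  rw [ProjectivePlane.lineCount_eq]
  simp only [Finset.sum_range_succ, Finset.range_zero, Finset.sum_empty] at horder
  nlinarith

theorem mk_mem_mk_iff {v w : Fin 3 → K} (hv : v ≠ 0) (hw : w ≠ 0) :
    mk K v hv ∈ mk K w hw ↔ w ⬝ᵥ v = 0 := by
  rw [dotProduct_comm]
  exact Iff.rfl

variable {q : ℕ} {U : Set (PGPt K)}

theorem IsUnital.ncard_mem (hU : IsUnital q U) (l : PGPt K) :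
    {x ∈ U | x ∈ l}.ncard = 1 ∨ {x ∈ U | x ∈ l}.ncard = q + 1 := by
  induction l using Projectivization.ind with | h w hw =>
  let f : Module.Dual K (Fin 3 → K) := dotProductEquiv K (Fin 3) w
  have hf : f ≠ 0 := (dotProductEquiv K (Fin 3)).map_ne_zero_iff.2 hw
  have hrank : Module.finrank K f.ker = 2 := by
    have := Module.Dual.finrank_ker_add_one_of_ne_zero hf
    rw [Module.finrank_fin_fun] at this
    omega
  have hmem : ∀ x : PGPt K, x ∈ mk K w hw ↔ PGMem x ⟨f.ker, hrank⟩ := by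
    intro x
    induction x using Projectivization.ind with | h v hv =>
    change _ ↔ (mk K v hv).submodule ≤ f.ker
    rw [mk_mem_mk_iff, submodule_mk, Submodule.span_singleton_le_iff_mem, LinearMap.mem_ker,
      dotProductEquiv_apply_apply]
  simpa only [hmem] using hU.2 ⟨f.ker, hrank⟩

theorem IsUnital.existsUnique_tangent [Finite K] (hU : IsUnital q U) (hK : Nat.card K = q ^ 2)
    {p : PGPt K} (hp : p ∈ U) : ∃! l : PGPt K, p ∈ l ∧ {x ∈ U | x ∈ l}.ncard = 1 := by
  classical
  have hq : q ≠ 0 := by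
    rintro rfl
    simpa [hK] using Nat.card_pos (α := K)
  exact existsUnique_mem_and_ncard_eq_one hq (n := q ^ 2) (by rw [hU.1]; ring) hU.ncard_mem hp
    (by rw [lineCount_projectivization, hK])

end ProjectivePlane

section Cone

open Matrix

/-- The cone over `U`: the nonzero vectors of `K³` that span a point of `U`. It describes `U` in
homogeneous coordinates. -/
def cone (U : Set (PGPt K)) : Set (Fin 3 → K) := {v | ∃ hv : v ≠ 0, mk K v hv ∈ U}

variable {U : Set (PGPt K)} {u v w : Fin 3 → K}

theorem mem_cone_iff (hv : v ≠ 0) : v ∈ cone U ↔ mk K v hv ∈ U :=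
  exists_prop_of_true hv

theorem ne_zero_of_mem_cone (hv : v ∈ cone U) : v ≠ 0 := hv.1

theorem smul_mem_cone_iff {a : K} (ha : a ≠ 0) : a • v ∈ cone U ↔ v ∈ cone U := by
  rcases eq_or_ne v 0 with rfl | hv
  · rw [smul_zero]
  · rw [mem_cone_iff (smul_ne_zero ha hv), mem_cone_iff hv,
      (mk_eq_mk_iff' K _ _ (smul_ne_zero ha hv) hv).2 ⟨a, rfl⟩]

theorem exists_smul_add_smul_eq (hw : w ≠ 0) (huv : LinearIndependent K ![u, v]) (hu : w ⬝ᵥ u = 0)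
    (hv : w ⬝ᵥ v = 0) {x : Fin 3 → K} (hx : w ⬝ᵥ x = 0) : ∃ a b : K, a • u + b • v = x := by
  let f : Module.Dual K (Fin 3 → K) := dotProductEquiv K (Fin 3) w
  have hf : f ≠ 0 := (dotProductEquiv K (Fin 3)).map_ne_zero_iff.2 hw
  have hspan : Submodule.span K (Set.range ![u, v]) = f.ker := by
    refine Submodule.eq_of_le_of_finrank_eq (Submodule.span_le.2 ?_) ?_
    · rintro _ ⟨i, rfl⟩
      fin_cases i
      exacts [hu, hv]
    · have := Module.Dual.finrank_ker_add_one_of_ne_zero hf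
      rw [Module.finrank_fin_fun] at this
      rw [finrank_span_eq_card huv, Fintype.card_fin]
      omega
  rw [← Submodule.mem_span_pair, ← Matrix.range_cons_cons_empty u v ![], hspan]
  exact hx

theorem smul_add_ne_zero (huv : LinearIndependent K ![u, v]) (t : K) : t • u + v ≠ 0 := fun h ↦
  one_ne_zero (LinearIndependent.pair_iff.1 huv t 1 (by rwa [one_smul])).2

theorem mem_mk_iff_eq_or_exists (hw : w ≠ 0) (huv : LinearIndependent K ![u, v])
    (hu : w ⬝ᵥ u = 0) (hv : w ⬝ᵥ v = 0) {x : PGPt K} :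
    x ∈ mk K w hw ↔ x = mk K u (huv.ne_zero 0) ∨
      ∃ t, x = mk K (t • u + v) (smul_add_ne_zero huv t) := by
  constructor
  · intro hx
    induction x using Projectivization.ind with | h x hx₀ =>
    obtain ⟨a, b, rfl⟩ := exists_smul_add_smul_eq hw huv hu hv ((mk_mem_mk_iff hx₀ hw).1 hx)
    rcases eq_or_ne b 0 with rfl | hb
    · exact Or.inl ((mk_eq_mk_iff' K _ _ _ _).2 ⟨a, by module⟩)
    · exact Or.inr ⟨a / b, (mk_eq_mk_iff' K _ _ _ _).2
        ⟨b, by rw [smul_add, smul_smul, mul_div_cancel₀ _ hb]⟩⟩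
  · rintro (rfl | ⟨t, rfl⟩)
    · exact (mk_mem_mk_iff _ hw).2 hu
    · rw [mk_mem_mk_iff, dotProduct_add, dotProduct_smul, hu, hv, smul_zero, add_zero]

theorem ncard_mem_mk_eq [Finite K] (hw : w ≠ 0) (huv : LinearIndependent K ![u, v])
    (hu : w ⬝ᵥ u = 0) (hv : w ⬝ᵥ v = 0) :
    {x ∈ U | x ∈ mk K w hw}.ncard =
      {t : K | t • u + v ∈ cone U}.ncard + (cone U).indicator 1 u := by
  have hind := LinearIndependent.pair_iff.1 huv
  have hu₀ : u ≠ 0 := huv.ne_zero 0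
  let point (t : K) : PGPt K := mk K (t • u + v) (smul_add_ne_zero huv t)
  have hpoint : Function.Injective point := by
    intro s t hst
    obtain ⟨a, ha⟩ := (mk_eq_mk_iff' K _ _ _ _).1 hst
    obtain ⟨hs, h1⟩ := hind (a * t - s) (a - 1) (by linear_combination (norm := module) ha)
    linear_combination t * h1 - hs
  have hne : ∀ t, point t ≠ mk K u hu₀ := by
    intro t ht
    obtain ⟨a, ha⟩ := (mk_eq_mk_iff' K _ _ _ _).1 ht
    exact one_ne_zero (hind (t - a) 1 (by linear_combination (norm := module) -ha)).2
  have hsplit : {x ∈ U | x ∈ mk K w hw} =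
      point '' {t | t • u + v ∈ cone U} ∪ {x ∈ U | x = mk K u hu₀} := by
    ext x
    simp only [mem_mk_iff_eq_or_exists hw huv hu hv, mem_cone_iff (smul_add_ne_zero huv _),
      Set.mem_union, Set.mem_image, Set.mem_ofPred_eq, point]
    grind
  have hat : {x ∈ U | x = mk K u hu₀}.ncard = (cone U).indicator 1 u := by
    by_cases h : u ∈ cone U
    · rw [Set.indicator_of_mem h, Pi.one_apply, Set.ncard_eq_one]
      exact ⟨mk K u hu₀, by ext x; simpa using by rintro rfl; exact (mem_cone_iff hu₀).1 h⟩
    · rw [Set.indicator_of_notMem h, Set.ncard_eq_zero, Set.eq_empty_iff_forall_notMem]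
      rintro _ ⟨hx, rfl⟩
      exact h ((mem_cone_iff hu₀).2 hx)
  have hdisj : Disjoint (point '' {t | t • u + v ∈ cone U}) {x ∈ U | x = mk K u hu₀} := by
    rw [Set.disjoint_left]
    rintro _ ⟨t, -, rfl⟩ ⟨-, ht⟩
    exact hne t ht
  rw [hsplit, Set.ncard_union_eq hdisj, Set.ncard_image_of_injective _ hpoint, hat]

variable {q : ℕ}

theorem IsUnital.ncard_add_indicator [Finite K] (hU : IsUnital q U)
    (huv : LinearIndependent K ![u, v]) :
    {t : K | t • u + v ∈ cone U}.ncard + (cone U).indicator 1 u = 1 ∨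
      {t : K | t • u + v ∈ cone U}.ncard + (cone U).indicator 1 u = q + 1 := by
  rw [← ncard_mem_mk_eq (crossProduct_ne_zero_iff_linearIndependent.2 huv) huv
    ((dotProduct_comm _ _).trans (dot_self_cross u v))
    ((dotProduct_comm _ _).trans (dot_cross_self u v))]
  exact hU.ncard_mem _

theorem IsUnital.exists_tangent [Finite K] (hU : IsUnital q U) (hK : Nat.card K = q ^ 2)
    (hu : u ∈ cone U) : ∃ w : Fin 3 → K, w ⬝ᵥ u = 0 ∧
      ∀ v, LinearIndependent K ![u, v] → (w ⬝ᵥ v = 0 ↔ ∀ t : K, t • u + v ∉ cone U) := by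
  have hu₀ := ne_zero_of_mem_cone hu
  obtain ⟨l, ⟨hul, hl⟩, huniq⟩ := hU.existsUnique_tangent hK ((mem_cone_iff hu₀).1 hu)
  induction l using Projectivization.ind with | h w hw =>
  rw [mk_mem_mk_iff] at hul
  have htangent : ∀ (v w : Fin 3 → K) (hw : w ≠ 0), LinearIndependent K ![u, v] → w ⬝ᵥ u = 0 →
      w ⬝ᵥ v = 0 → ({x ∈ U | x ∈ mk K w hw}.ncard = 1 ↔ ∀ t : K, t • u + v ∉ cone U) := by
    intro v w hw huv hwu hwv
    rw [ncard_mem_mk_eq hw huv hwu hwv, Set.indicator_of_mem hu, Pi.one_apply, Nat.add_eq_right,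
      Set.ncard_eq_zero, Set.eq_empty_iff_forall_notMem]
    exact Iff.rfl
  refine ⟨w, hul, fun v huv ↦ ⟨fun hwv ↦ (htangent v w hw huv hul hwv).1 hl, fun hv ↦ ?_⟩⟩
  have hcross := crossProduct_ne_zero_iff_linearIndependent.2 huv
  have hcu : (u ⨯₃ v) ⬝ᵥ u = 0 := (dotProduct_comm _ _).trans (dot_self_cross u v)
  have hcv : (u ⨯₃ v) ⬝ᵥ v = 0 := (dotProduct_comm _ _).trans (dot_cross_self u v)
  have heq := huniq (mk K _ hcross)
    ⟨(mk_mem_mk_iff hu₀ hcross).2 hcu, (htangent v _ hcross huv hcu hcv).2 hv⟩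
  have hv₀ : v ≠ 0 := huv.ne_zero 1
  exact (mk_mem_mk_iff hv₀ hw).1 (heq ▸ (mk_mem_mk_iff hv₀ hcross).2 hcv)

end Cone

section TangentFrame

open Matrix

/-- A linear coordinate system `φ` of `PG(2,K)` adapted to two points `P`, `Q` of `U`: the points
`P`, `R`, `Q` have coordinates `(1:0:0)`, `(0:1:0)`, `(0:0:1)`, where `R` is the common point of
the tangents at `P` and `Q`. The tangents are encoded by `tangent_left` and `tangent_right`: among
the lines through `P`, only `z = 0` misses the rest of `U`, and likewise `x = 0` among the lines
through `Q`. -/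
structure IsTangentFrame (U : Set (PGPt K)) (P Q : PGPt K)
    (φ : (Fin 3 → K) ≃ₗ[K] (Fin 3 → K)) : Prop where
  left_mem : P ∈ U
  right_mem : Q ∈ U
  map_left : φ ![1, 0, 0] = P.rep
  map_right : φ ![0, 0, 1] = Q.rep
  tangent_left : ∀ y z : K, y ≠ 0 ∨ z ≠ 0 → ((∀ x, φ ![x, y, z] ∉ cone U) ↔ z = 0)
  tangent_right : ∀ x y : K, x ≠ 0 ∨ y ≠ 0 → ((∀ z, φ ![x, y, z] ∉ cone U) ↔ x = 0)

/-- The affine points `(x : 1 : z)` of `U` in the coordinates `φ`, as pairs `(x, z)`. -/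
def affinePart (U : Set (PGPt K)) (φ : (Fin 3 → K) ≃ₗ[K] (Fin 3 → K)) : Set (K × K) :=
  {p | φ ![p.1, 1, p.2] ∈ cone U}

/-- The points `(x : 0 : 1)` of `U` in the coordinates `φ`, as elements `x` of `K`. Only the point
`(1 : 0 : 0)` of the line `y = 0` is left out. -/
def infinitePart (U : Set (PGPt K)) (φ : (Fin 3 → K) ≃ₗ[K] (Fin 3 → K)) : Set K :=
  {x | φ ![x, 0, 1] ∈ cone U}

variable {q : ℕ} {U : Set (PGPt K)} {P Q : PGPt K}

theorem rep_mem_cone_iff : P.rep ∈ cone U ↔ P ∈ U := by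
  rw [mem_cone_iff (rep_nonzero P), mk_rep]

theorem exists_linearEquiv_apply {u r v : Fin 3 → K} (h : LinearIndependent K ![u, r, v]) :
    ∃ φ : (Fin 3 → K) ≃ₗ[K] (Fin 3 → K), ∀ x y z, φ ![x, y, z] = x • u + y • r + z • v := by
  let b := basisOfLinearIndependentOfCardEqFinrank h (by simp)
  refine ⟨b.equivFun.symm, fun x y z ↦ ?_⟩
  simp [b, Module.Basis.equivFun_symm_apply, Fin.sum_univ_three]

theorem linearIndependent_of_dotProduct_eq_zero {u v w w' : Fin 3 → K} (hwu : w ⬝ᵥ u = 0)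
    (hwv : w ⬝ᵥ v ≠ 0) (hwv' : w' ⬝ᵥ v = 0) (hwu' : w' ⬝ᵥ u ≠ 0) :
    LinearIndependent K ![u, w ⨯₃ w', v] := by
  refine linearIndependent_rows_of_det_ne_zero ?_
  rw [← triple_product_eq_det, triple_product_permutation, cross_dot_cross]
  simp_all [dotProduct_comm]

theorem linearIndependent_pair_map (φ : (Fin 3 → K) ≃ₗ[K] (Fin 3 → K)) {u v : Fin 3 → K}
    (h : LinearIndependent K ![u, v]) : LinearIndependent K ![φ u, φ v] := by
  have := h.map' φ.toLinearMap φ.ker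
  rwa [show ⇑φ.toLinearMap ∘ ![u, v] = ![φ u, φ v] by ext i; fin_cases i <;> rfl] at this

theorem linearIndependent_pair_left {y z : K} (h : y ≠ 0 ∨ z ≠ 0) :
    LinearIndependent K ![![1, 0, 0], ![0, y, z]] := by
  refine LinearIndependent.pair_iff.2 fun s t hst ↦ ?_
  simp [cons_eq_zero_iff] at hst
  grind

theorem linearIndependent_pair_right {x y : K} (h : x ≠ 0 ∨ y ≠ 0) :
    LinearIndependent K ![![0, 0, 1], ![x, y, 0]] := by
  refine LinearIndependent.pair_iff.2 fun s t hst ↦ ?_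
  simp [cons_eq_zero_iff] at hst
  grind

theorem IsUnital.exists_isTangentFrame [Finite K] (hU : IsUnital q U) (hK : Nat.card K = q ^ 2)
    (hP : P ∈ U) (hQ : Q ∈ U) (hPQ : P ≠ Q) : ∃ φ, IsTangentFrame U P Q φ := by
  have huv : LinearIndependent K ![P.rep, Q.rep] := linearIndependent_pair_iff_ne.2 hPQ
  have hu := rep_mem_cone_iff.2 hP
  have hv := rep_mem_cone_iff.2 hQ
  obtain ⟨w, hwu, hwtan⟩ := hU.exists_tangent hK hu
  obtain ⟨w', hwv', hwtan'⟩ := hU.exists_tangent hK hv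
  have hwv : w ⬝ᵥ Q.rep ≠ 0 := fun h ↦ (hwtan _ huv).1 h 0 (by simpa using hv)
  have hwu' : w' ⬝ᵥ P.rep ≠ 0 := fun h ↦
    (hwtan' _ (LinearIndependent.pair_symm_iff.1 huv)).1 h 0 (by simpa using hu)
  obtain ⟨φ, hφ⟩ := exists_linearEquiv_apply
    (linearIndependent_of_dotProduct_eq_zero hwu hwv hwv' hwu')
  refine ⟨φ, hP, hQ, by simp [hφ], by simp [hφ], fun y z hyz ↦ ?_, fun x y hxy ↦ ?_⟩
  · have hind := linearIndependent_pair_map φ (linearIndependent_pair_left hyz)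
    have hw : w ⬝ᵥ φ ![0, y, z] = 0 ↔ z = 0 := by
      simp [hφ, dotProduct_add, dot_self_cross, hwv]
    rw [show φ ![1, 0, 0] = P.rep by simp [hφ]] at hind
    rw [← hw, hwtan _ hind]
    simp [hφ, add_assoc]
  · have hind := linearIndependent_pair_map φ (linearIndependent_pair_right hxy)
    have hw' : w' ⬝ᵥ φ ![x, y, 0] = 0 ↔ x = 0 := by
      simp [hφ, dotProduct_add, dot_cross_self, hwu']
    rw [show φ ![0, 0, 1] = Q.rep by simp [hφ]] at hind
    rw [← hw', hwtan' _ hind]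
    simp [hφ, add_comm]

namespace IsTangentFrame

variable {φ : (Fin 3 → K) ≃ₗ[K] (Fin 3 → K)} (hφ : IsTangentFrame U P Q φ)
include hφ

theorem left_mem_cone : φ ![1, 0, 0] ∈ cone U := by
  rw [hφ.map_left, rep_mem_cone_iff]
  exact hφ.left_mem

theorem right_mem_cone : φ ![0, 0, 1] ∈ cone U := by
  rw [hφ.map_right, rep_mem_cone_iff]
  exact hφ.right_mem

theorem ncard_of_ne_zero [Finite K] (hU : IsUnital q U) (y : K) {z : K} (hz : z ≠ 0) :
    {x | φ ![x, y, z] ∈ cone U}.ncard = q := by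
  have hcard := hU.ncard_add_indicator
    (linearIndependent_pair_map φ (linearIndependent_pair_left (Or.inr hz : y ≠ 0 ∨ z ≠ 0)))
  rw [Set.indicator_of_mem hφ.left_mem_cone] at hcard
  simp only [← map_smul, ← map_add] at hcard
  simp only [smul_cons, smul_eq_mul, mul_one, mul_zero, smul_empty, cons_add_cons, add_zero,
    zero_add, empty_add_empty, Pi.one_apply, Nat.add_right_cancel_iff] at hcard
  refine hcard.resolve_left fun h ↦ hz ((hφ.tangent_left y z (Or.inr hz)).1 fun x hx ↦ ?_)
  exact Set.notMem_empty x (((Set.ncard_eq_zero (Set.toFinite _)).1 (Nat.add_eq_right.1 h)) ▸ hx)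

theorem isAffineUnital [Finite K] (hU : IsUnital q U) :
    IsAffineUnital q (affinePart U φ) (infinitePart U φ) where
  zero_mem := hφ.right_mem_cone
  ncard_infinity := hφ.ncard_of_ne_zero hU 0 one_ne_zero
  notMem x := (hφ.tangent_left 1 0 (by simp)).2 rfl x
  ncard_row z hz := hφ.ncard_of_ne_zero hU 1 hz
  ncard_line m b := by
    have hind : LinearIndependent K ![![m, 0, 1], ![b, 1, 0]] := by
      refine LinearIndependent.pair_iff.2 fun s t hst ↦ ⟨?_, ?_⟩
      · simpa using congrFun hst 2
      · simpa using congrFun hst 1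
    have hcard := hU.ncard_add_indicator (linearIndependent_pair_map φ hind)
    have hindicator : (infinitePart U φ).indicator 1 m =
        (cone U).indicator (1 : (Fin 3 → K) → ℕ) (φ ![m, 0, 1]) := rfl
    simp only [← map_smul, ← map_add] at hcard
    simpa [affinePart, hindicator, mul_comm] using hcard

end IsTangentFrame

end TangentFrame

section Stabilizer

open Matrix

variable {U : Set (PGPt K)} {P Q : PGPt K}

theorem projHom_mk (e : (Fin 3 → K) ≃ₗ[K] (Fin 3 → K)) {v : Fin 3 → K} (hv : v ≠ 0) :
    projHom e (mk K v hv) = mk K (e v) (e.map_ne_zero_iff.2 hv) := rfl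

theorem apply_mem_cone_iff {e : (Fin 3 → K) ≃ₗ[K] (Fin 3 → K)} (he : projHom e '' U = U)
    {v : Fin 3 → K} : e v ∈ cone U ↔ v ∈ cone U := by
  rcases eq_or_ne v 0 with rfl | hv
  · rw [map_zero]
  · rw [mem_cone_iff hv, mem_cone_iff (e.map_ne_zero_iff.2 hv), ← projHom_mk e hv]
    simpa only [he] using (projHom e).injective.mem_set_image (s := U) (a := mk K v hv)

theorem exists_apply_rep_eq_smul {e : (Fin 3 → K) ≃ₗ[K] (Fin 3 → K)} (he : projHom e P = P) :
    ∃ a : Kˣ, e P.rep = (a : K) • P.rep := by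
  have hmk : mk K (e P.rep) (e.map_ne_zero_iff.2 (rep_nonzero P)) = mk K P.rep (rep_nonzero P) := by
    rw [← projHom_mk e (rep_nonzero P), mk_rep, he]
  obtain ⟨a, ha⟩ := (mk_eq_mk_iff K _ _ _ _).1 hmk
  exact ⟨a, ha.symm⟩

theorem vec3_eta {α : Type*} (v : Fin 3 → α) : ![v 0, v 1, v 2] = v :=
  FinVec.etaExpand_eq v

theorem map_vec3 {M : Type*} [AddCommGroup M] [Module K M] (f : (Fin 3 → K) →ₗ[K] M) (x y z : K) :
    f ![x, y, z] = x • f ![1, 0, 0] + y • f ![0, 1, 0] + z • f ![0, 0, 1] := by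
  simp [← map_smul, ← map_add]

namespace IsTangentFrame

variable {φ : (Fin 3 → K) ≃ₗ[K] (Fin 3 → K)} (hφ : IsTangentFrame U P Q φ)
  {e : (Fin 3 → K) ≃ₗ[K] (Fin 3 → K)}
include hφ

theorem exists_apply_vec3_eq (heP : projHom e P = P) (heQ : projHom e Q = Q) :
    ∃ (a c : Kˣ) (b₀ b₁ b₂ : K), ∀ x y z,
      e (φ ![x, y, z]) = φ ![a * x + b₀ * y, b₁ * y, b₂ * y + c * z] := by
  obtain ⟨a, ha⟩ := exists_apply_rep_eq_smul heP
  obtain ⟨c, hc⟩ := exists_apply_rep_eq_smul heQ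
  rw [← hφ.map_left] at ha
  rw [← hφ.map_right] at hc
  obtain ⟨b, hb⟩ := φ.surjective (e (φ ![0, 1, 0]))
  rw [← vec3_eta b] at hb
  refine ⟨a, c, b 0, b 1, b 2, fun x y z ↦ ?_⟩
  have h := map_vec3 (φ.trans e).toLinearMap x y z
  simp only [LinearEquiv.coe_coe, LinearEquiv.trans_apply, ha, hc, ← hb, ← map_smul, ← map_add] at h
  simp [h, mul_comm]

theorem exists_apply_eq_smul (he : projHom e '' U = U) (heP : projHom e P = P)
    (heQ : projHom e Q = Q) :
    ∃ (t : Kˣ × Kˣ) (b : Kˣ), ∀ x y z,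
      e (φ ![x, y, z]) = (b : K) • φ ![t.1 * x, y, t.2 * z] := by
  obtain ⟨a, c, b₀, b₁, b₂, h⟩ := hφ.exists_apply_vec3_eq heP heQ
  have hleft : ∀ s, φ ![s, b₁, b₂] ∉ cone U := by
    intro s
    have hs := h ((s - b₀) / a) 1 0
    rw [mul_div_cancel₀ _ a.ne_zero] at hs
    have := (hφ.tangent_left 1 0 (by simp)).2 rfl ((s - b₀) / a)
    rw [← apply_mem_cone_iff he, hs] at this
    simpa using this
  have hright : ∀ s, φ ![b₀, b₁, s] ∉ cone U := by
    intro s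
    have hs := h 0 1 ((s - b₂) / c)
    rw [mul_div_cancel₀ _ c.ne_zero] at hs
    have := (hφ.tangent_right 0 1 (by simp)).2 rfl ((s - b₂) / c)
    rw [← apply_mem_cone_iff he, hs] at this
    simpa using this
  obtain rfl : b₂ = 0 := (hφ.tangent_left b₁ b₂ (by
    by_contra! hb
    exact hleft 1 (by simpa [hb] using hφ.left_mem_cone))).1 hleft
  obtain rfl : b₀ = 0 := (hφ.tangent_right b₀ b₁ (by
    by_contra! hb
    exact hright 1 (by simpa [hb] using hφ.right_mem_cone))).1 hright
  have hb : b₁ ≠ 0 := by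
    rintro rfl
    exact hleft 1 hφ.left_mem_cone
  lift b₁ to Kˣ using hb.isUnit
  refine ⟨(a / b₁, c / b₁), b₁, fun x y z ↦ ?_⟩
  rw [h, ← map_smul]
  congr 1
  ext i
  fin_cases i <;> simp <;> field

omit hφ in
theorem mem_diagonalStabilizer (he : projHom e '' U = U) {t : Kˣ × Kˣ} {b : Kˣ}
    (h : ∀ x y z, e (φ ![x, y, z]) = (b : K) • φ ![t.1 * x, y, t.2 * z]) :
    t ∈ diagonalStabilizer (affinePart U φ) (infinitePart U φ) := by
  have hS : ∀ x y z, φ ![t.1 * x, y, t.2 * z] ∈ cone U ↔ φ ![x, y, z] ∈ cone U := fun x y z ↦ by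
    rw [← smul_mem_cone_iff b.ne_zero, ← h, apply_mem_cone_iff he]
  refine ⟨fun x z ↦ hS x 1 z, fun x ↦ ?_⟩
  have h0 := hS x 0 1
  rw [← smul_mem_cone_iff t.2⁻¹.ne_zero, ← map_smul] at h0
  simpa [infinitePart, div_eq_mul_inv, mul_comm, mul_assoc] using h0

theorem card_twoPtStab_le [Finite K] : Nat.card (twoPtStab U P Q) ≤
    Nat.card (diagonalStabilizer (affinePart U φ) (infinitePart U φ)) := by
  have hdiag : ∀ σ : twoPtStab U P Q,
      ∃ t ∈ diagonalStabilizer (affinePart U φ) (infinitePart U φ), ∃ e, projHom e = σ.1 ∧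
        ∃ b : Kˣ, ∀ x y z, e (φ ![x, y, z]) = (b : K) • φ ![t.1 * x, y, t.2 * z] := by
    rintro ⟨_, ⟨⟨e, rfl⟩, he⟩, heP, heQ⟩
    obtain ⟨t, b, h⟩ := hφ.exists_apply_eq_smul he heP heQ
    exact ⟨t, mem_diagonalStabilizer he h, e, rfl, b, h⟩
  choose t ht e he b hb using hdiag
  refine Nat.card_le_card_of_injective (fun σ ↦ ⟨t σ, ht σ⟩) fun σ τ hστ ↦ ?_
  rw [Subtype.mk.injEq] at hστ
  refine Subtype.ext (Equiv.ext fun x ↦ ?_)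
  induction x using Projectivization.ind with | h v hv =>
  obtain ⟨v, rfl⟩ := φ.surjective v
  rw [← he σ, ← he τ, projHom_mk, projHom_mk, mk_eq_mk_iff]
  refine ⟨b σ / b τ, ?_⟩
  rw [← vec3_eta v, hb, hb, hστ, Units.smul_def, smul_smul, ← Units.val_mul, div_mul_cancel]

end IsTangentFrame

end Stabilizer

section HermitianForm

open Matrix

variable {q : ℕ} {U : Set (PGPt K)} {P Q : PGPt K} {φ : (Fin 3 → K) ≃ₗ[K] (Fin 3 → K)}

theorem IsTangentFrame.exists_mem_cone_iff [Fintype K] (hφ : IsTangentFrame U P Q φ)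
    (hU : IsUnital q U) (hK : Fintype.card K = q ^ 2) (hq : 2 < q)
    (hcard : q ^ 2 - 1 ≤ Nat.card (twoPtStab U P Q)) :
    ∃ e ≠ 0, ∃ a : K, a ^ q ≠ a ∧ ∀ x y z, ![e * x, y, z] ≠ 0 →
      (φ ![e * x, y, z] ∈ cone U ↔ x ^ q * z - x * z ^ q = (a - a ^ q) * y ^ (q + 1)) := by
  obtain ⟨e, he, a, ha, hinf, haff⟩ := (hφ.isAffineUnital hU).exists_mem_iff hK hq
    (hcard.trans hφ.card_twoPtStab_le)
  refine ⟨e, he, a, ha, fun x y z hxyz ↦ ?_⟩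
  rcases eq_or_ne y 0 with rfl | hy
  · rcases eq_or_ne z 0 with rfl | hz
    · have hx : e * x ≠ 0 := fun h ↦ hxyz (by simp [h])
      have hmem := (smul_mem_cone_iff hx).2 hφ.left_mem_cone
      rw [← map_smul] at hmem
      simpa [(zero_lt_two.trans hq).ne'] using hmem
    · have hmem := hinf (x / z)
      rw [infinitePart, Set.mem_ofPred_eq, ← smul_mem_cone_iff hz, ← map_smul, div_pow] at hmem
      simp only [smul_cons, smul_eq_mul, mul_zero, mul_one, smul_empty] at hmem
      rw [show z * (e * (x / z)) = e * x by field] at hmem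
      rw [hmem, zero_pow q.succ_ne_zero, mul_zero, sub_eq_zero,
        div_eq_div_iff (pow_ne_zero q hz) hz]
  · have hmem := haff (x / y) (z / y)
    rw [affinePart, Set.mem_ofPred_eq, ← smul_mem_cone_iff hy, ← map_smul, div_pow, div_pow] at hmem
    simp only [smul_cons, smul_eq_mul, mul_one, smul_empty] at hmem
    rw [show y * (e * (x / y)) = e * x by field, mul_div_cancel₀ z hy] at hmem
    rw [hmem, ← div_eq_iff (pow_ne_zero _ hy)]
    refine Eq.congr_left ?_
    field

theorem exists_linearEquiv_mem_cone_iff [Fintype K] (hK : Fintype.card K = q ^ 2) {e a : K}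
    (he : e ≠ 0) (ha : a ^ q ≠ a) (h : ∀ x y z, ![e * x, y, z] ≠ 0 →
      (φ ![e * x, y, z] ∈ cone U ↔ x ^ q * z - x * z ^ q = (a - a ^ q) * y ^ (q + 1))) :
    ∃ ψ : (Fin 3 → K) ≃ₗ[K] (Fin 3 → K), ∀ v ≠ 0,
      (ψ v ∈ cone U ↔ v 0 ^ (q + 1) + v 1 ^ (q + 1) + v 2 ^ (q + 1) = 0) := by
  classical
  have hneg : (-1 : K) ∈ subfieldUnits q K :=
    (mem_subfieldUnits hK).2 ⟨neg_one_pow_of_card_eq_sq hK, neg_ne_zero.2 one_ne_zero⟩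
  obtain ⟨d, hd, hd'⟩ := exists_pow_succ_eq_of_mem_subfieldUnits hK hneg
  have hdet : !![e * a, 0, 1; 0, 1, 0; e * (a ^ q * d), 0, d].det = e * (a - a ^ q) * d := by
    simp [det_fin_three]
    ring
  have hind : LinearIndependent K ![![e * a, 0, 1], ![0, 1, 0], ![e * (a ^ q * d), 0, d]] := by
    refine linearIndependent_rows_of_det_ne_zero (A := !![e * a, 0, 1; 0, 1, 0; _, 0, d]) ?_
    rw [hdet]
    exact mul_ne_zero (mul_ne_zero he (sub_ne_zero.2 ha.symm)) hd
  obtain ⟨χ, hχ⟩ := exists_linearEquiv_apply hind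
  refine ⟨χ.trans φ, fun v hv ↦ ?_⟩
  have hv' : χ v = ![e * (v 0 * a + v 2 * (a ^ q * d)), v 1, v 0 + v 2 * d] := by
    nth_rw 1 [← vec3_eta v, hχ]
    simp
    ring
  have hform : (v 0 * a + v 2 * (a ^ q * d)) ^ q * (v 0 + v 2 * d) -
      (v 0 * a + v 2 * (a ^ q * d)) * (v 0 + v 2 * d) ^ q - (a - a ^ q) * v 1 ^ (q + 1) =
        (a ^ q - a) * (v 0 ^ (q + 1) + v 1 ^ (q + 1) + v 2 ^ (q + 1)) := by
    simp only [add_pow_of_card_eq_sq hK, mul_pow, pow_pow_of_card_eq_sq hK]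
    linear_combination (a - a ^ q) * v 2 ^ (q + 1) * hd'
  rw [LinearEquiv.trans_apply, hv', h _ _ _ (hv' ▸ χ.map_ne_zero_iff.2 hv), ← sub_eq_zero, hform,
    mul_eq_zero_iff_left (sub_ne_zero.2 ha)]

theorem isClassicalUnital_of_mem_cone_iff (φ : (Fin 3 → K) ≃ₗ[K] (Fin 3 → K))
    (h : ∀ v ≠ 0, (φ v ∈ cone U ↔ v 0 ^ (q + 1) + v 1 ^ (q + 1) + v 2 ^ (q + 1) = 0)) :
    IsClassicalUnital q U := by
  refine ⟨projHom φ, ⟨φ, rfl⟩, ((projHom φ).eq_preimage_iff_image_eq _ _).1 ?_⟩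
  ext x
  rw [Set.mem_preimage, Set.mem_ofPred_eq, ← h _ (rep_nonzero x),
    mem_cone_iff (φ.map_ne_zero_iff.2 (rep_nonzero x)), ← projHom_mk φ (rep_nonzero x), mk_rep]

end HermitianForm

/-- **Main theorem.** Let `q > 2` be a prime power and `K` the field with `q²` elements. If a
unital `U` in `PG(2,q²)` has two distinct points `P, Q` whose stabiliser in the subgroup of
`PGL(3,K)` preserving `U` has order `q² - 1`, then `U` is classical. -/
theorem unital_classical_of_two_point_stabiliser
    (q : ℕ) (hq : IsPrimePow q) (hq2 : 2 < q)
    {K : Type*} [Field K] [Fintype K] (hK : Fintype.card K = q ^ 2)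
    (U : Set (PGPt K)) (hU : IsUnital q U)
    (P Q : PGPt K) (hP : P ∈ U) (hQ : Q ∈ U) (hPQ : P ≠ Q)
    (hstab : Nat.card (twoPtStab U P Q) = q ^ 2 - 1) :
    IsClassicalUnital q U := by
  obtain ⟨φ, hφ⟩ := hU.exists_isTangentFrame (Nat.card_eq_fintype_card.trans hK) hP hQ hPQ
  obtain ⟨e, he, a, ha, hcone⟩ := hφ.exists_mem_cone_iff hU hK hq2 hstab.ge
  obtain ⟨ψ, hψ⟩ := exists_linearEquiv_mem_cone_iff hK he ha hcone
  exact isClassicalUnital_of_mem_cone_iff ψ hψ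
end

section
/- Let q be a prime power, K a finite field with q² elements, λ a generator of the multiplicative group K*, and let g : K × K → K × K be the bijection g(x,y) = (λx, λ^{q+1}y); let G be the cyclic group generated by g. Then: (i) the G-orbit of any point (x,y) with x ≠ 0 has exactly q² − 1 elements, and there are exactly q² such orbits; (ii) the G-orbit of any point (0,y) with y ≠ 0 has exactly q − 1 elements, and there are exactly q + 1 such orbits; (iii) consequently G has exactly q² + q + 1 orbits on (K × K) \ {(0,0)}. -/
/-- The permutation `(x, y) ↦ (λ x, λ^{q+1} y)` of `K × K`. -/
def gPerm {K : Type*} [Field K] (q : ℕ) (u : Kˣ) : Equiv.Perm (K × K) :=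
  Equiv.prodCongr (MulAction.toPerm u) (MulAction.toPerm (u ^ (q + 1)))

/-- The cyclic group generated by `gPerm q u`, as a subgroup of the permutations of `K × K`. -/
def gGroup {K : Type*} [Field K] (q : ℕ) (u : Kˣ) : Subgroup (Equiv.Perm (K × K)) :=
  Subgroup.zpowers (gPerm q u)

/-!
On `K × K` with coordinates `(x, y)`, the orbit of a point under `G = ⟨g⟩` has as many elements as
the period of the point under `g`, and that is the least common multiple of the periods of its two
coordinates. A nonzero coordinate has period `orderOf λ`, respectively `orderOf (λ ^ (q + 1))`, and
the second number divides the first. So all orbits in each of the two `G`-invariant sets `x ≠ 0`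
and `x = 0 ≠ y` have the same size, and their number is the size of the set divided by it. For `λ`
primitive in a field with `q²` elements the two sizes are `q² - 1` and `q - 1`.
-/

open MulAction Set Function
open scoped Pointwise

section Orbits

variable {G α : Type*} [Group G] [MulAction G α]

lemma ncard_image_orbit_mul {S : Set α} (hfin : S.Finite) (hS : ∀ s ∈ S, orbit G s ⊆ S) {n : ℕ}
    (hn : ∀ s ∈ S, (orbit G s).ncard = n) : (orbit G '' S).ncard * n = S.ncard := by
  have hunion : ⋃ O ∈ orbit G '' S, O = S := by
    rw [biUnion_image]
    exact (iUnion₂_subset hS).antisymm fun s hs ↦ mem_biUnion hs (mem_orbit_self s)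
  have hfinite : ∀ O ∈ orbit G '' S, O.Finite :=
    forall_mem_image.2 fun s hs ↦ hfin.subset (hS s hs)
  have hdisj : (orbit G '' S).PairwiseDisjoint id :=
    orbit.pairwiseDisjoint.subset (image_subset_range _ _)
  calc (orbit G '' S).ncard * n = ∑ᶠ O ∈ orbit G '' S, n := by
        rw [finsum_mem_eq_finite_toFinset_sum _ (hfin.image _), Finset.sum_const, smul_eq_mul,
          ncard_eq_toFinset_card _ (hfin.image _)]
    _ = ∑ᶠ O ∈ orbit G '' S, O.ncard :=
        finsum_mem_congr rfl (forall_mem_image.2 fun s hs ↦ (hn s hs).symm)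
    _ = S.ncard := by rw [← (hfin.image _).ncard_biUnion hfinite hdisj, hunion]

lemma disjoint_image_orbit {S T : Set α} (hS : ∀ s ∈ S, orbit G s ⊆ S) (h : Disjoint S T) :
    Disjoint (orbit G '' S) (orbit G '' T) := by
  rw [disjoint_left]
  rintro _ ⟨s, hs, rfl⟩ ⟨t, ht, hts⟩
  exact disjoint_left.1 h (hS s hs (hts ▸ mem_orbit_self t)) ht

lemma ncard_orbit_zpowers (g : G) (a : α) :
    (orbit (Subgroup.zpowers g) a).ncard = period g a := by
  rw [period, ← Nat.card_coe_set_eq, Nat.card_congr (orbitZPowersEquiv g a), Nat.card_zmod]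

lemma orbit_zpowers_subset {g : G} {S : Set α} (hg : g ∈ stabilizer G S) :
    ∀ s ∈ S, orbit (Subgroup.zpowers g) s ⊆ S := by
  rintro s hs _ ⟨⟨h, hh⟩, rfl⟩
  exact (mem_stabilizer_set.1 (Subgroup.zpowers_le.2 hg hh) s).2 hs

end Orbits

lemma period_units_of_ne_zero {M₀ : Type*} [MonoidWithZero M₀] [IsRightCancelMulZero M₀] (u : M₀ˣ)
    {x : M₀} (hx : x ≠ 0) : period u x = orderOf u := by
  refine Nat.dvd_right_iff_eq.1 fun n ↦ ?_
  rw [← pow_smul_eq_iff_period_dvd, orderOf_dvd_iff_pow_eq_one, Units.smul_def, smul_eq_mul,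
    mul_eq_right₀ hx, Units.val_eq_one]

lemma sq_sub_one_eq_mul (q : ℕ) : q ^ 2 - 1 = (q + 1) * (q - 1) := by
  simpa using Nat.sq_sub_sq q 1

lemma sq_sub_one_div_sub_one {q : ℕ} (hq : 1 < q) : (q ^ 2 - 1) / (q - 1) = q + 1 := by
  rw [sq_sub_one_eq_mul, Nat.mul_div_cancel _ (Nat.sub_pos_of_lt hq)]

lemma orderOf_pow_succ_of_orderOf_eq {M : Type*} [Monoid M] {a : M} {q : ℕ}
    (ha : orderOf a = q ^ 2 - 1) : orderOf (a ^ (q + 1)) = q - 1 := by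
  rw [sq_sub_one_eq_mul] at ha
  rw [orderOf_pow_of_dvd q.succ_ne_zero (ha ▸ dvd_mul_right _ _), ha,
    Nat.mul_div_cancel_left _ q.succ_pos]

section GGroup

variable {K : Type*} [Field K] (q : ℕ) (u : Kˣ)

lemma period_gPerm (s : K × K) :
    period (gPerm q u) s = (period u s.1).lcm (period (u ^ (q + 1)) s.2) :=
  minimalPeriod_prodMap (u • ·) (u ^ (q + 1) • ·) s

lemma ncard_orbit_gGroup_of_fst_ne_zero {s : K × K} (hs : s.1 ≠ 0) :
    (orbit (gGroup q u) s).ncard = orderOf u := by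
  have hdvd : period (u ^ (q + 1)) s.2 ∣ orderOf u :=
    (period_dvd_orderOf _ _).trans (orderOf_pow_dvd _)
  rw [gGroup, ncard_orbit_zpowers, period_gPerm, period_units_of_ne_zero u hs,
    Nat.lcm_eq_left hdvd]

lemma ncard_orbit_gGroup_of_fst_eq_zero {s : K × K} (hs₁ : s.1 = 0) (hs₂ : s.2 ≠ 0) :
    (orbit (gGroup q u) s).ncard = orderOf (u ^ (q + 1)) := by
  have hfix : period u s.1 = 1 := period_eq_one_iff.2 (by rw [hs₁, smul_zero])
  rw [gGroup, ncard_orbit_zpowers, period_gPerm, hfix, period_units_of_ne_zero _ hs₂,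
    Nat.lcm_one_left]

lemma orbit_gGroup_subset_compl_zero_prod_univ :
    ∀ s ∈ ({0}ᶜ ×ˢ univ : Set (K × K)), orbit (gGroup q u) s ⊆ {0}ᶜ ×ˢ univ :=
  orbit_zpowers_subset <| mem_stabilizer_set.2 fun s ↦ by simp [gPerm, smul_eq_zero_iff_eq]

lemma orbit_gGroup_subset_zero_prod_compl_zero :
    ∀ s ∈ ({0} ×ˢ {0}ᶜ : Set (K × K)), orbit (gGroup q u) s ⊆ {0} ×ˢ {0}ᶜ :=
  orbit_zpowers_subset <| mem_stabilizer_set.2 fun s ↦ by simp [gPerm, smul_eq_zero_iff_eq]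

variable [Finite K]

lemma ncard_image_orbit_gGroup_compl_zero_prod_univ :
    (orbit (gGroup q u) '' ({0}ᶜ ×ˢ univ : Set (K × K))).ncard =
      (Nat.card K - 1) * Nat.card K / orderOf u := by
  refine Nat.eq_div_of_mul_eq_left (orderOf_pos u).ne' ?_
  rw [ncard_image_orbit_mul (toFinite _) (orbit_gGroup_subset_compl_zero_prod_univ q u)
    fun s hs ↦ ncard_orbit_gGroup_of_fst_ne_zero q u hs.1, ncard_prod, ncard_compl, ncard_singleton,
    ncard_univ]

lemma ncard_image_orbit_gGroup_zero_prod_compl_zero :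
    (orbit (gGroup q u) '' ({0} ×ˢ {0}ᶜ : Set (K × K))).ncard =
      (Nat.card K - 1) / orderOf (u ^ (q + 1)) := by
  refine Nat.eq_div_of_mul_eq_left (orderOf_pos _).ne' ?_
  rw [ncard_image_orbit_mul (toFinite _) (orbit_gGroup_subset_zero_prod_compl_zero q u)
    fun s hs ↦ ncard_orbit_gGroup_of_fst_eq_zero q u hs.1 hs.2, ncard_prod, ncard_compl,
    ncard_singleton, one_mul]

end GGroup

/-- The divisions are exact: each numerator is the size of a set that the orbits cut into parts of
equal size. -/
theorem gGroup_orbit_structure_general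
    (q : ℕ) (K : Type*) [Field K] [Finite K] (u : Kˣ) :
    (∀ x y : K, x ≠ 0 →
        (MulAction.orbit (gGroup q u) ((x, y) : K × K)).ncard = orderOf u) ∧
    {O : Set (K × K) | ∃ x y : K, x ≠ 0 ∧
        O = MulAction.orbit (gGroup q u) ((x, y) : K × K)}.ncard =
      (Nat.card K - 1) * Nat.card K / orderOf u ∧
    (∀ y : K, y ≠ 0 →
        (MulAction.orbit (gGroup q u) ((0, y) : K × K)).ncard = orderOf (u ^ (q + 1))) ∧
    {O : Set (K × K) | ∃ y : K, y ≠ 0 ∧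
        O = MulAction.orbit (gGroup q u) ((0, y) : K × K)}.ncard =
      (Nat.card K - 1) / orderOf (u ^ (q + 1)) ∧
    {O : Set (K × K) | ∃ s : K × K, s ≠ (0, 0) ∧
        O = MulAction.orbit (gGroup q u) s}.ncard =
      (Nat.card K - 1) * Nat.card K / orderOf u + (Nat.card K - 1) / orderOf (u ^ (q + 1)) := by
  have hfst : {O : Set (K × K) | ∃ x y : K, x ≠ 0 ∧ O = orbit (gGroup q u) (x, y)} =
      orbit (gGroup q u) '' ({0}ᶜ ×ˢ univ) := by
    ext O; simp [eq_comm]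
  have hsnd : {O : Set (K × K) | ∃ y : K, y ≠ 0 ∧ O = orbit (gGroup q u) (0, y)} =
      orbit (gGroup q u) '' ({0} ×ˢ {0}ᶜ) := by
    ext O; simp [eq_comm]
  have hall : {O : Set (K × K) | ∃ s : K × K, s ≠ (0, 0) ∧ O = orbit (gGroup q u) s} =
      orbit (gGroup q u) '' ({0}ᶜ ×ˢ univ) ∪ orbit (gGroup q u) '' ({0} ×ˢ {0}ᶜ) := by
    have hne : ({(0, 0)}ᶜ : Set (K × K)) = {0}ᶜ ×ˢ univ ∪ {0} ×ˢ {0}ᶜ := by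
      ext ⟨x, y⟩
      by_cases hx : x = 0 <;> simp [hx]
    rw [← image_union, ← hne]
    ext O
    simp only [mem_ofPred_eq, mem_image, mem_compl_singleton_iff, eq_comm]
  have hdisj : Disjoint ({0}ᶜ ×ˢ univ : Set (K × K)) ({0} ×ˢ {0}ᶜ) :=
    disjoint_compl_left.set_prod_left _ _
  rw [hfst, hsnd, hall, ncard_union_eq
    (disjoint_image_orbit (orbit_gGroup_subset_compl_zero_prod_univ q u) hdisj),
    ncard_image_orbit_gGroup_compl_zero_prod_univ, ncard_image_orbit_gGroup_zero_prod_compl_zero]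
  exact ⟨fun x y hx ↦ ncard_orbit_gGroup_of_fst_ne_zero q u hx, rfl,
    fun y hy ↦ ncard_orbit_gGroup_of_fst_eq_zero q u rfl hy, rfl, rfl⟩

/-- Orbit structure of `G = ⟨(x,y) ↦ (λx, λ^{q+1}y)⟩` on `K × K`, `λ` a generator of `K*`:
the orbits of points with `x ≠ 0` have size `q² - 1` and there are `q²` of them; the orbits of
points `(0,y)`, `y ≠ 0`, have size `q - 1` and there are `q + 1` of them; altogether `G` has
`q² + q + 1` orbits on the nonzero vectors. -/
theorem gGroup_orbit_structure
    (q : ℕ) (hq : IsPrimePow q)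
    (K : Type*) [Field K] [Fintype K] (hK : Fintype.card K = q ^ 2)
    (u : Kˣ) (hu : ∀ x : Kˣ, x ∈ Subgroup.zpowers u) :
    (∀ x y : K, x ≠ 0 →
        (MulAction.orbit (gGroup q u) ((x, y) : K × K)).ncard = q ^ 2 - 1) ∧
    {O : Set (K × K) | ∃ x y : K, x ≠ 0 ∧
        O = MulAction.orbit (gGroup q u) ((x, y) : K × K)}.ncard = q ^ 2 ∧
    (∀ y : K, y ≠ 0 →
        (MulAction.orbit (gGroup q u) ((0, y) : K × K)).ncard = q - 1) ∧
    {O : Set (K × K) | ∃ y : K, y ≠ 0 ∧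
        O = MulAction.orbit (gGroup q u) ((0, y) : K × K)}.ncard = q + 1 ∧
    {O : Set (K × K) | ∃ s : K × K, s ≠ (0, 0) ∧
        O = MulAction.orbit (gGroup q u) s}.ncard = q ^ 2 + q + 1 := by
  have hu₁ : orderOf u = q ^ 2 - 1 := by
    rw [orderOf_eq_card_of_forall_mem_zpowers hu, Nat.card_units, Nat.card_eq_fintype_card, hK]
  have hpos : 0 < q ^ 2 - 1 := Nat.sub_pos_of_lt (Nat.one_lt_pow two_ne_zero hq.one_lt)
  simpa only [hu₁, orderOf_pow_succ_of_orderOf_eq hu₁, Nat.card_eq_fintype_card, hK,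
    Nat.mul_div_cancel_left _ hpos, sq_sub_one_div_sub_one hq.one_lt, add_assoc]
    using gGroup_orbit_structure_general q K u
end
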